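/- arXiv:2512.24874 — 12 statements merged into one kernel-verified Lean document; each statement's English description precedes it below -/
import Mathlib

section
/- Let M be an invertible 3×3 complex matrix such that M·M = I₃ and (M ⊕ I₂)·(I₂ ⊕ M) = (I₂ ⊕ M)·(M ⊕ I₂) as 5×5 matrices (i.e. M determines a homogeneous 3-local representation of the twin group T_n for n ≥ 4). Then M has one of the following forms: (1) M = [[1,0,0],[d,−1,f],[0,0,1]] for some d,f ∈ ℂ; (2) M = [[1,0,0],[0,−s,f],[0,h,s]] for some f,h,s ∈ ℂ with s² = 1 − f·h; (3) M = [[1,b,0],[0,−1,0],[0,h,1]] for some b,h ∈ ℂ; (4) M = [[−s,b,0],[d,s,0],[0,0,1]] for some b,d,s ∈ ℂ with s² = 1 − b·d; or M is one of the five diagonal matrices diag(1,−1,−1), diag(−1,−1,1), I₃, −I₃, diag(−1,1,−1). -/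
/-!
Write `X = M - 1`. The commutation relation says that the two shifted copies of `X`, which overlap
in a single index, commute, i.e. `X j 2 * X 0 k = 0` unless `(j, k) = (2, 0)`, and
`X j 0 * X 2 k = 0` unless `(j, k) = (0, 2)`. In particular `(M 0 2) ^ 2 = (M 2 0) ^ 2 = 0`, so `M`
is tridiagonal. If `f = M 1 2` or `h = M 2 1` is nonzero, then `M 0 0 = 1`; if `b = M 0 1` or
`d = M 1 0` is nonzero, then `M 2 2 = 1`. Moreover `f * b = d * h = 0`. Together with `M * M = 1`,
splitting on which of `b, d, f, h` vanish gives the list; when all four vanish, `M` is diagonal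
with entries `±1`.
-/

open Matrix

/-- `TLoc n i M` is the `(n+1)×(n+1)` matrix `I_{i-1} ⊕ M ⊕ I_{n-i-1}`:
the 3×3 block `M` occupies rows and columns `i-1, i, i+1` (with `i` 1-indexed,
`1 ≤ i ≤ n-1`), and all other diagonal entries are `1`.
In particular `TLoc 4 1 M = M ⊕ I₂`, `TLoc 4 3 M = I₂ ⊕ M` (5×5), and
`TLoc 3 1 M = M ⊕ I₁`, `TLoc 3 2 M = I₁ ⊕ M` (4×4). -/
def TLoc (n i : ℕ) (M : Matrix (Fin 3) (Fin 3) ℂ) : Matrix (Fin (n+1)) (Fin (n+1)) ℂ :=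
  Matrix.of fun j k =>
    if hj : i - 1 ≤ (j : ℕ) ∧ (j : ℕ) ≤ i + 1 then
      if hk : i - 1 ≤ (k : ℕ) ∧ (k : ℕ) ≤ i + 1 then
        M ⟨(j : ℕ) - (i - 1), by omega⟩ ⟨(k : ℕ) - (i - 1), by omega⟩
      else 0
    else if j = k then 1 else 0

/-- The entrywise content of the commutation relation: the two extreme
corners of the `5 × 5` identity make `M` tridiagonal; the other products tie its off-diagonal
entries to each other and to `M 0 0` and `M 2 2`. -/
lemma entries_of_comm (M : Matrix (Fin 3) (Fin 3) ℂ)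
    (h2 : TLoc 4 1 M * TLoc 4 3 M = TLoc 4 3 M * TLoc 4 1 M) :
    M 0 2 = 0 ∧ M 2 0 = 0 ∧ M 1 2 * (M 0 0 - 1) = 0 ∧ M 1 2 * M 0 1 = 0 ∧
      (M 2 2 - 1) * M 0 1 = 0 ∧ M 1 0 * (M 2 2 - 1) = 0 ∧ M 1 0 * M 2 1 = 0 ∧
      (M 0 0 - 1) * M 2 1 = 0 := by
  have e04 := congrFun (congrFun h2 0) 4
  have e40 := congrFun (congrFun h2 4) 0
  have e12 := congrFun (congrFun h2 1) 2
  have e13 := congrFun (congrFun h2 1) 3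
  have e23 := congrFun (congrFun h2 2) 3
  have e32 := congrFun (congrFun h2 3) 2
  have e31 := congrFun (congrFun h2 3) 1
  have e21 := congrFun (congrFun h2 2) 1
  simp [TLoc, Matrix.mul_apply, Fin.sum_univ_succ] at e04 e40 e12 e13 e23 e32 e31 e21
  grind

/-- classification of the homogeneous 3-local representations of `Tₙ` (`n ≥ 4`):
if `M` is an invertible 3×3 complex matrix with `M·M = I₃` and
`(M ⊕ I₂)(I₂ ⊕ M) = (I₂ ⊕ M)(M ⊕ I₂)`, then `M` has one of the listed forms. -/
theorem stmt0 (M : Matrix (Fin 3) (Fin 3) ℂ) (hM : IsUnit M)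
    (h1 : M * M = 1)
    (h2 : TLoc 4 1 M * TLoc 4 3 M = TLoc 4 3 M * TLoc 4 1 M) :
    (∃ d f : ℂ, M = !![1, 0, 0; d, -1, f; 0, 0, 1]) ∨
    (∃ f h s : ℂ, s ^ 2 = 1 - f * h ∧ M = !![1, 0, 0; 0, -s, f; 0, h, s]) ∨
    (∃ b h : ℂ, M = !![1, b, 0; 0, -1, 0; 0, h, 1]) ∨
    (∃ b d s : ℂ, s ^ 2 = 1 - b * d ∧ M = !![-s, b, 0; d, s, 0; 0, 0, 1]) ∨
    M = !![1, 0, 0; 0, -1, 0; 0, 0, -1] ∨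
    M = !![-1, 0, 0; 0, -1, 0; 0, 0, 1] ∨
    M = !![1, 0, 0; 0, 1, 0; 0, 0, 1] ∨
    M = !![-1, 0, 0; 0, -1, 0; 0, 0, -1] ∨
    M = !![-1, 0, 0; 0, 1, 0; 0, 0, -1] := by
  obtain ⟨hc, hg, k1, k2, k3, k4, k5, k6⟩ := entries_of_comm M h2
  have q : ∀ j k, (M * M) j k = (1 : Matrix (Fin 3) (Fin 3) ℂ) j k := fun j k => by rw [h1]
  have q00 := q 0 0
  have q01 := q 0 1
  have q10 := q 1 0
  have q11 := q 1 1
  have q12 := q 1 2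
  have q21 := q 2 1
  have q22 := q 2 2
  simp [Matrix.mul_apply, Fin.sum_univ_succ, hc, hg] at q00 q01 q10 q11 q12 q21 q22
  have hMe : M = !![M 0 0, M 0 1, 0; M 1 0, M 1 1, M 1 2; 0, M 2 1, M 2 2] := by
    ext j k
    fin_cases j <;> fin_cases k <;> simp [hc, hg]
  clear q h1 h2 hM hc hg
  generalize M 0 0 = a at *
  generalize M 0 1 = b at *
  generalize M 1 0 = d at *
  generalize M 1 1 = e at *
  generalize M 1 2 = f at *
  generalize M 2 1 = h at *
  generalize M 2 2 = i at *
  subst hMe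
  by_cases hf : f = 0
  · by_cases hb : b = 0
    · by_cases hd : d = 0
      · by_cases hh : h = 0
        · subst hf hb hd hh
          have ha : a = 1 ∨ a = -1 := by grind
          have he : e = 1 ∨ e = -1 := by grind
          have hi : i = 1 ∨ i = -1 := by grind
          clear q00 q01 q10 q11 q12 q21 q22 k1 k2 k3 k4 k5 k6
          rcases ha with rfl | rfl <;> rcases he with rfl | rfl <;> rcases hi with rfl | rfl
          · simp
          · exact Or.inr (Or.inl ⟨0, 0, -1, by norm_num, by simp⟩)
          · exact Or.inl ⟨0, 0, rfl⟩
          · simp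
          · exact Or.inr (Or.inr (Or.inr (Or.inl ⟨0, 0, 1, by norm_num, rfl⟩)))
          · simp
          · simp
          · simp
        · obtain rfl : a = 1 := by grind
          obtain rfl : e = -i := by grind
          exact Or.inr (Or.inl ⟨f, h, i, by grind, by rw [hb, hd]⟩)
      · obtain rfl : i = 1 := by grind
        obtain rfl : a = -e := by grind
        obtain rfl : h = 0 := by grind
        exact Or.inr (Or.inr (Or.inr (Or.inl ⟨b, d, e, by grind, by rw [hf]⟩)))
    · obtain rfl : i = 1 := by grind
      obtain rfl : a = -e := by grind
      by_cases hh : h = 0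
      · exact Or.inr (Or.inr (Or.inr (Or.inl ⟨b, d, e, by grind, by rw [hf, hh]⟩)))
      · obtain rfl : e = -1 := by grind
        obtain rfl : d = 0 := by grind
        exact Or.inr (Or.inr (Or.inl ⟨b, h, by rw [hf, neg_neg]⟩))
  · obtain rfl : a = 1 := by grind
    obtain rfl : e = -i := by grind
    obtain rfl : b = 0 := by grind
    by_cases hd : d = 0
    · exact Or.inr (Or.inl ⟨f, h, i, by grind, by rw [hd]⟩)
    · obtain rfl : i = 1 := by grind
      obtain rfl : h = 0 := by grind
      exact Or.inl ⟨d, f, rfl⟩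
end

section
/- Let M be a 3×3 complex matrix of any one of the following forms: (1) M = [[1,0,0],[d,−1,f],[0,0,1]] with d,f ∈ ℂ; (2) M = [[1,0,0],[0,−s,f],[0,h,s]] with f,h,s ∈ ℂ and s² = 1 − f·h; (3) M = [[1,b,0],[0,−1,0],[0,h,1]] with b,h ∈ ℂ; (4) M = [[−s,b,0],[d,s,0],[0,0,1]] with b,d,s ∈ ℂ and s² = 1 − b·d; (5) M ∈ {diag(1,−1,−1), diag(−1,−1,1), I₃, −I₃, diag(−1,1,−1)}. Then M·M = I₃ and (M ⊕ I₂)·(I₂ ⊕ M) = (I₂ ⊕ M)·(M ⊕ I₂) as 5×5 matrices; consequently, for every n ≥ 4 the assignment s_i ↦ T_i(M) defines a homogeneous 3-local representation of the twin group T_n. -/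
/-!
Write `N = M - 1` and let `E i` be the `(n+1) × 3` matrix whose columns are the consecutive basis
vectors on which the block of `TLoc n i M` acts, so that `TLoc n i M = 1 + E i * N * (E i)ᵀ`
(`TLoc_eq`). Since `(E i)ᵀ * E i = 1`, the relation `M * M = 1` passes to `TLoc n i M`.

For `i + 2 ≤ j` the two blocks share at most one basis vector: `(E i)ᵀ * E j` is `0` if `i + 2 < j`
and is the matrix unit `S = single 2 0 1` if `j = i + 2`. In the first case the perturbations of
the identity annihilate each other. In the second case commutation means
`E i * (N * S * N) * (E j)ᵀ = E j * (N * Sᵀ * N) * (E i)ᵀ`. This holds as soon as `N * S * N = c • S`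
and `N * Sᵀ * N = c • Sᵀ` for a common scalar `c`, because `E i * S * (E j)ᵀ` is the projection onto
the shared basis vector and hence symmetric. Every listed `M` satisfies both identities: `c = 0`,
except for `-1` and `diag(-1, 1, -1)`, where `c = 4`.
-/

open Matrix

/-- The inclusion of the coordinates `i - 1, i, i + 1` (0-indexed positions) into `Fin (n + 1)`, as
an `(n+1) × 3` matrix. -/
def blockIncl (n i : ℕ) : Matrix (Fin (n+1)) (Fin 3) ℂ :=
  Matrix.of fun x a => if (x : ℕ) = i - 1 + a then 1 else 0

lemma TLoc_eq (n i : ℕ) (hi : 1 ≤ i) (M : Matrix (Fin 3) (Fin 3) ℂ) :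
    TLoc n i M = 1 + blockIncl n i * (M - 1) * (blockIncl n i)ᵀ := by
  obtain ⟨k, rfl⟩ : ∃ k, i = k + 1 := ⟨i - 1, by omega⟩
  -- A position outside the block meets no column of the inclusion.
  have out : ∀ x : Fin (n+1), ¬ (k ≤ (x : ℕ) ∧ (x : ℕ) ≤ k + 1 + 1) →
      ∀ a : Fin 3, (x : ℕ) ≠ k + a := by
    intro x hx a; omega
  ext x y
  simp only [TLoc, blockIncl, Matrix.add_apply, Matrix.mul_apply, Matrix.of_apply,
    Matrix.transpose_apply, Matrix.one_apply, Matrix.sub_apply, Nat.add_sub_cancel]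
  by_cases hx : k ≤ (x : ℕ) ∧ (x : ℕ) ≤ k + 1 + 1
  · obtain ⟨a, ha⟩ : ∃ a : Fin 3, (x : ℕ) = k + a := ⟨⟨x - k, by omega⟩, by simp; omega⟩
    have ea : ∀ h, (⟨(x : ℕ) - k, h⟩ : Fin 3) = a := fun h => Fin.ext (by simp; omega)
    by_cases hy : k ≤ (y : ℕ) ∧ (y : ℕ) ≤ k + 1 + 1
    · obtain ⟨b, hb⟩ : ∃ b : Fin 3, (y : ℕ) = k + b := ⟨⟨y - k, by omega⟩, by simp; omega⟩
      have eb : ∀ h, (⟨(y : ℕ) - k, h⟩ : Fin 3) = b := fun h => Fin.ext (by simp; omega)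
      have exy : x = y ↔ a = b := by rw [Fin.ext_iff, Fin.ext_iff]; omega
      simp only [dif_pos hx, dif_pos hy, ea, eb, exy]
      simp [ha, hb, ← Fin.ext_iff]
    · have hxy : x ≠ y := by rintro rfl; exact hy hx
      simp [hx, hy, hxy, out y hy]
  · simp [hx, out x hx]

lemma blockIncl_transpose_mul_apply (n i j : ℕ) (hi : 1 ≤ i) (hin : i ≤ n - 1) (a b : Fin 3) :
    ((blockIncl n i)ᵀ * blockIncl n j) a b = if i - 1 + (a : ℕ) = j - 1 + b then 1 else 0 := by
  simp only [blockIncl, Matrix.mul_apply, Matrix.of_apply, Matrix.transpose_apply]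
  rw [Finset.sum_eq_single ⟨i - 1 + a, by omega⟩]
  · simp
  · intro x _ hx
    rw [if_neg fun h => hx (Fin.ext h), zero_mul]
  · simp

lemma blockIncl_transpose_mul_self (n i : ℕ) (hi : 1 ≤ i) (hin : i ≤ n - 1) :
    (blockIncl n i)ᵀ * blockIncl n i = 1 := by
  ext a b
  simp [blockIncl_transpose_mul_apply n i i hi hin, Matrix.one_apply, Fin.ext_iff]

lemma blockIncl_transpose_mul_of_lt (n i j : ℕ) (hi : 1 ≤ i) (hj : j ≤ n - 1) (hij : i + 2 < j) :
    (blockIncl n i)ᵀ * blockIncl n j = 0 := by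
  ext a b
  rw [blockIncl_transpose_mul_apply n i j hi (by omega), if_neg (by omega), Matrix.zero_apply]

lemma blockIncl_transpose_mul_add_two (n i : ℕ) (hi : 1 ≤ i) (hin : i + 2 ≤ n - 1) :
    (blockIncl n i)ᵀ * blockIncl n (i + 2) = Matrix.single 2 0 1 := by
  ext a b
  rw [blockIncl_transpose_mul_apply n i (i + 2) hi (by omega), Matrix.single_apply]
  refine if_congr ?_ rfl rfl
  rw [Fin.ext_iff, Fin.ext_iff, Fin.val_zero, Fin.val_two]
  omega

/-- Both sides are the projection onto the basis vector shared by the two blocks. -/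
lemma blockIncl_mul_single_symm (n i : ℕ) (hi : 1 ≤ i) :
    blockIncl n i * (Matrix.single 2 0 1 : Matrix (Fin 3) (Fin 3) ℂ) * (blockIncl n (i + 2))ᵀ =
      blockIncl n (i + 2) * (Matrix.single 0 2 1 : Matrix (Fin 3) (Fin 3) ℂ) * (blockIncl n i)ᵀ := by
  have e : i + 2 - 1 = i - 1 + 2 := by omega
  ext x y
  simp [blockIncl, Matrix.mul_apply, Matrix.single_apply, Fin.sum_univ_three, e]

lemma TLoc_mul_self (n i : ℕ) (hi : 1 ≤ i) (hin : i ≤ n - 1) (M : Matrix (Fin 3) (Fin 3) ℂ)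
    (hM : M * M = 1) : TLoc n i M * TLoc n i M = 1 := by
  rw [TLoc_eq n i hi]
  have h := blockIncl_transpose_mul_self n i hi hin
  set E := blockIncl n i
  have hN : (M - 1) * (M - 1) = -((M - 1) + (M - 1)) := by
    rw [sub_mul, mul_sub, hM]; simp; abel
  have h2 : E * (M - 1) * Eᵀ * (E * (M - 1) * Eᵀ)
      = -(E * (M - 1) * Eᵀ + E * (M - 1) * Eᵀ) := by
    calc _ = E * ((M - 1) * (Eᵀ * E) * (M - 1)) * Eᵀ := by simp only [Matrix.mul_assoc]
      _ = _ := by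
        rw [h, Matrix.mul_one, hN, Matrix.mul_neg, Matrix.neg_mul, Matrix.mul_add, Matrix.add_mul]
  rw [add_mul, mul_add, mul_add, h2]
  simp

lemma TLoc_comm (n i j : ℕ) (hi : 1 ≤ i) (hj : j ≤ n - 1) (hij : i + 2 ≤ j)
    (M : Matrix (Fin 3) (Fin 3) ℂ) (c : ℂ)
    (h₁ : (M - 1) * Matrix.single 2 0 1 * (M - 1) = c • Matrix.single 2 0 1)
    (h₂ : (M - 1) * Matrix.single 0 2 1 * (M - 1) = c • Matrix.single 0 2 1) :
    TLoc n i M * TLoc n j M = TLoc n j M * TLoc n i M := by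
  rw [TLoc_eq n i hi, TLoc_eq n j (by omega)]
  -- It suffices that the perturbations of the identity commute.
  suffices h : Commute (blockIncl n i * (M - 1) * (blockIncl n i)ᵀ)
      (blockIncl n j * (M - 1) * (blockIncl n j)ᵀ) from
    (((Commute.one_left _).add_left ((Commute.one_right _).add_right h)) : Commute _ _).eq
  have e₁ : ∀ E F : Matrix (Fin (n+1)) (Fin 3) ℂ,
      E * (M - 1) * Eᵀ * (F * (M - 1) * Fᵀ) = E * ((M - 1) * (Eᵀ * F) * (M - 1)) * Fᵀ := by
    intro E F; simp only [Matrix.mul_assoc]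
  have e₂ : (blockIncl n j)ᵀ * blockIncl n i = ((blockIncl n i)ᵀ * blockIncl n j)ᵀ := by
    rw [Matrix.transpose_mul, Matrix.transpose_transpose]
  rw [Commute, SemiconjBy, e₁, e₁, e₂]
  rcases hij.lt_or_eq with hlt | rfl
  · rw [blockIncl_transpose_mul_of_lt n i j hi hj hlt]
    simp
  · rw [blockIncl_transpose_mul_add_two n i hi hj, Matrix.transpose_single, h₁, h₂]
    simp only [Matrix.mul_smul, Matrix.smul_mul, blockIncl_mul_single_symm n i hi]

/-- each of the listed forms of `M` satisfies `M·M = I₃` and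
`(M ⊕ I₂)(I₂ ⊕ M) = (I₂ ⊕ M)(M ⊕ I₂)`; consequently for every `n ≥ 4` the assignment
`s_i ↦ T_i(M)` defines a homogeneous 3-local representation of the twin group `Tₙ`
(i.e. the images satisfy the defining relations of `Tₙ`). -/
theorem stmt1 (M : Matrix (Fin 3) (Fin 3) ℂ)
    (hM :
      (∃ d f : ℂ, M = !![1, 0, 0; d, -1, f; 0, 0, 1]) ∨
      (∃ f h s : ℂ, s ^ 2 = 1 - f * h ∧ M = !![1, 0, 0; 0, -s, f; 0, h, s]) ∨
      (∃ b h : ℂ, M = !![1, b, 0; 0, -1, 0; 0, h, 1]) ∨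
      (∃ b d s : ℂ, s ^ 2 = 1 - b * d ∧ M = !![-s, b, 0; d, s, 0; 0, 0, 1]) ∨
      M = !![1, 0, 0; 0, -1, 0; 0, 0, -1] ∨
      M = !![-1, 0, 0; 0, -1, 0; 0, 0, 1] ∨
      M = !![1, 0, 0; 0, 1, 0; 0, 0, 1] ∨
      M = !![-1, 0, 0; 0, -1, 0; 0, 0, -1] ∨
      M = !![-1, 0, 0; 0, 1, 0; 0, 0, -1]) :
    M * M = 1 ∧
    TLoc 4 1 M * TLoc 4 3 M = TLoc 4 3 M * TLoc 4 1 M ∧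
    ∀ n : ℕ, 4 ≤ n →
      (∀ i : ℕ, 1 ≤ i → i ≤ n - 1 → TLoc n i M * TLoc n i M = 1) ∧
      (∀ i j : ℕ, 1 ≤ i → i ≤ n - 1 → 1 ≤ j → j ≤ n - 1 → (i + 2 ≤ j ∨ j + 2 ≤ i) →
        TLoc n i M * TLoc n j M = TLoc n j M * TLoc n i M) := by
  obtain ⟨hsq, c, h₁, h₂⟩ : M * M = 1 ∧ ∃ c : ℂ,
      (M - 1) * Matrix.single 2 0 1 * (M - 1) = c • Matrix.single 2 0 1 ∧
      (M - 1) * Matrix.single 0 2 1 * (M - 1) = c • Matrix.single 0 2 1 := by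
    -- With `N = M - 1`, the `(2, 0)` entry of `N * single 2 0 1 * N` is `N 2 2 * N 0 0`, which
    -- forces the value of `c`.
    refine ⟨?_, (M 0 0 - 1) * (M 2 2 - 1), ?_, ?_⟩ <;>
    rcases hM with ⟨d, f, rfl⟩ | ⟨f, h, s, hs, rfl⟩ | ⟨b, h, rfl⟩ | ⟨b, d, s, hs, rfl⟩ |
      rfl | rfl | rfl | rfl | rfl <;>
    ext x y <;> fin_cases x <;> fin_cases y <;>
    simp [Matrix.mul_apply, Fin.sum_univ_three, Matrix.single_apply, Matrix.one_apply] <;>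
    first | done | ring1 | linear_combination hs
  have comm : ∀ n i j : ℕ, 1 ≤ i → j ≤ n - 1 → i + 2 ≤ j →
      TLoc n i M * TLoc n j M = TLoc n j M * TLoc n i M :=
    fun n i j hi hj hij => TLoc_comm n i j hi hj hij M c h₁ h₂
  refine ⟨hsq, comm 4 1 3 (by norm_num) (by norm_num) (by norm_num), fun n _ =>
    ⟨fun i hi hin => TLoc_mul_self n i hi hin M hsq, ?_⟩⟩
  rintro i j hi hin hj hjn (hij | hij)
  · exact comm n i j hi hjn hij
  · exact (comm n j i hj hin hij).symm
end

section
/- Let n ≥ 4 and let M be a 3×3 complex matrix with M·M = I₃ and (M ⊕ I₂)·(I₂ ⊕ M) = (I₂ ⊕ M)·(M ⊕ I₂). Then the corresponding homogeneous 3-local representation of T_n is reducible: there exists a ℂ-subspace U of ℂ^{n+1} with U ≠ 0 and U ≠ ℂ^{n+1} such that T_i(M)·u ∈ U for every u ∈ U and every 1 ≤ i ≤ n−1. -/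
/-!
The commutation relation is used only through the entries of the two products in rows `0, 1` and
columns `3, 4`, where it reads `M j 2 * M 0 k = 0` for `j ∈ {0, 1}` and `k ∈ {1, 2}`
(`commute_entries`). Hence one of the following holds.

* `M 0 1 = M 0 2 = 0`. Only `T_1(M)` acts on the coordinate `u 0`, and it merely rescales it, so the
  hyperplane `u 0 = 0` is invariant.
* `M 0 2 = M 1 2 = 0`. Only `T_{n-1}(M)` moves the last basis vector, and it merely rescales it, so
  the line spanned by that vector is invariant.
-/

open Matrix

/-- The overlap of `M ⊕ I₂` and `I₂ ⊕ M` is the single index `2`, so in rows `0, 1` and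
columns `3, 4` the product in one order has entries `M j 2 * M 0 k`, and in the other order it is
zero. -/
lemma commute_entries (M : Matrix (Fin 3) (Fin 3) ℂ)
    (h2 : TLoc 4 1 M * TLoc 4 3 M = TLoc 4 3 M * TLoc 4 1 M) :
    M 0 2 * M 0 1 = 0 ∧ M 0 2 * M 0 2 = 0 ∧ M 1 2 * M 0 1 = 0 ∧ M 1 2 * M 0 2 = 0 := by
  have key : ∀ j k : Fin 5, (TLoc 4 1 M * TLoc 4 3 M) j k = (TLoc 4 3 M * TLoc 4 1 M) j k :=
    fun j k => by rw [h2]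
  have h03 := key 0 3
  have h04 := key 0 4
  have h13 := key 1 3
  have h14 := key 1 4
  simp [Matrix.mul_apply, Fin.sum_univ_succ, TLoc] at h03 h04 h13 h14
  refine ⟨?_, ?_, ?_, ?_⟩ <;> simp_all

/-- If the first row of `M` vanishes off the diagonal, so does the first row of every `T_i(M)`. -/
lemma TLoc_first_row (n i : ℕ) (hi : 1 ≤ i) (M : Matrix (Fin 3) (Fin 3) ℂ)
    (h01 : M 0 1 = 0) (h02 : M 0 2 = 0) (k : Fin (n + 1)) (hk : k ≠ 0) :
    TLoc n i M 0 k = 0 := by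
  have hk' : (k : ℕ) ≠ 0 := fun h => hk (Fin.ext h)
  simp only [TLoc, Matrix.of_apply]
  split_ifs with ha hb hc
  · have hi1 : i = 1 := by simp at ha; omega
    subst hi1
    obtain hk1 | hk2 : (k : ℕ) = 1 ∨ (k : ℕ) = 2 := by omega
    · convert h01 using 2
      · rfl
      · exact Fin.ext hk1
    · convert h02 using 2
      · rfl
      · exact Fin.ext hk2
  · rfl
  · exact absurd hc.symm hk
  · rfl

/-- If the last column of `M` vanishes off the diagonal, so does the last column of every
`T_i(M)`. -/
lemma TLoc_last_col (n i : ℕ) (hi : 1 ≤ i) (hin : i ≤ n - 1) (M : Matrix (Fin 3) (Fin 3) ℂ)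
    (h02 : M 0 2 = 0) (h12 : M 1 2 = 0) (j : Fin (n + 1)) (hj : j ≠ Fin.last n) :
    TLoc n i M j (Fin.last n) = 0 := by
  have hj' : (j : ℕ) ≠ n := fun h => hj (Fin.ext h)
  have hjn := j.isLt
  simp only [TLoc, Matrix.of_apply]
  split_ifs with ha hb
  · have hin' : n = i + 1 := by simp at hb; omega
    subst hin'
    obtain hk1 | hk2 : (j : ℕ) - (i - 1) = 0 ∨ (j : ℕ) - (i - 1) = 1 := by omega
    · convert h02 using 2
      · exact Fin.ext hk1
      · exact Fin.ext (by simp; omega)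
    · convert h12 using 2
      · exact Fin.ext hk2
      · exact Fin.ext (by simp; omega)
  · rfl
  · rfl

/-- every homogeneous 3-local representation of `Tₙ` (`n ≥ 4`) is reducible:
there is a nontrivial proper subspace of `ℂ^{n+1}` invariant under all `T_i(M)`. -/
theorem stmt2 (n : ℕ) (hn : 4 ≤ n) (M : Matrix (Fin 3) (Fin 3) ℂ)
    (h1 : M * M = 1)
    (h2 : TLoc 4 1 M * TLoc 4 3 M = TLoc 4 3 M * TLoc 4 1 M) :
    ∃ U : Submodule ℂ (Fin (n+1) → ℂ), U ≠ ⊥ ∧ U ≠ ⊤ ∧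
      ∀ u ∈ U, ∀ i : ℕ, 1 ≤ i → i ≤ n - 1 → (TLoc n i M).mulVec u ∈ U := by
  obtain ⟨ha, hb, hc, hd⟩ := commute_entries M h2
  have h0l : (0 : Fin (n + 1)) ≠ Fin.last n := fun h => by
    have := congrArg Fin.val h
    simp at this
    omega
  by_cases hrow : M 0 1 = 0 ∧ M 0 2 = 0
  · refine ⟨LinearMap.ker (LinearMap.proj (R := ℂ) (φ := fun _ => ℂ) (0 : Fin (n + 1))),
      ?_, ?_, ?_⟩
    · rw [Submodule.ne_bot_iff]
      exact ⟨Pi.single (Fin.last n) 1, by simp [h0l], by simp⟩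
    · intro h
      have : (Pi.single 0 1 : Fin (n + 1) → ℂ) ∈ (⊤ : Submodule ℂ (Fin (n + 1) → ℂ)) := trivial
      rw [← h] at this
      simp at this
    · intro u hu i hi _
      simp only [LinearMap.mem_ker, LinearMap.proj_apply] at hu ⊢
      rw [Matrix.mulVec, dotProduct]
      refine Finset.sum_eq_zero fun k _ => ?_
      by_cases hk : k = 0
      · rw [hk, hu, mul_zero]
      · rw [TLoc_first_row n i hi M hrow.1 hrow.2 k hk, zero_mul]
  · have hcol : M 0 2 = 0 ∧ M 1 2 = 0 := by
      simp only [mul_eq_zero] at ha hb hc hd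
      tauto
    -- The line spanned by the last basis vector, cut out by the vanishing of the other coordinates.
    refine ⟨⨅ j : {j : Fin (n + 1) // j ≠ Fin.last n},
      LinearMap.ker (LinearMap.proj (R := ℂ) (φ := fun _ => ℂ) (j : Fin (n + 1))), ?_, ?_, ?_⟩
    · rw [Submodule.ne_bot_iff]
      refine ⟨Pi.single (Fin.last n) 1, ?_, by simp⟩
      simp only [Submodule.mem_iInf, LinearMap.mem_ker, LinearMap.proj_apply]
      exact fun j => Pi.single_eq_of_ne j.2 _
    · intro h
      have : (Pi.single 0 1 : Fin (n + 1) → ℂ) ∈ (⊤ : Submodule ℂ (Fin (n + 1) → ℂ)) := trivial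
      rw [← h] at this
      simp only [Submodule.mem_iInf, LinearMap.mem_ker, LinearMap.proj_apply] at this
      simpa using this ⟨0, h0l⟩
    · intro u hu i hi hin
      simp only [Submodule.mem_iInf, LinearMap.mem_ker, LinearMap.proj_apply] at hu ⊢
      intro j
      rw [Matrix.mulVec, dotProduct]
      refine Finset.sum_eq_zero fun k _ => ?_
      by_cases hk : k = Fin.last n
      · rw [hk, TLoc_last_col n i hi hin M hcol.1 hcol.2 j j.2, zero_mul]
      · rw [hu ⟨k, hk⟩, mul_zero]
end

section
/- Let n ≥ 4, let d, f, s ∈ ℂ with f ≠ 0 and s² = 1 − d·f, and set x = (1 − s)/f. Let M₁ = [[1,0,0],[d,−1,f],[0,0,1]]. Then the vector v ∈ ℂ^{n+1} with coordinates v_k = x^{k} (k = 0,1,…,n) satisfies T_i(M₁)·v = v for every 1 ≤ i ≤ n−1; in particular the line spanned by v is invariant under the homogeneous 3-local representation τ₁ of T_n determined by M₁. -/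
/-! The matrix `T_i(M₁)` agrees with the identity except in row `i`, so it fixes every
coordinate of a vector other than the `i`-th, which it replaces by
`d v_{i-1} - v_i + f v_{i+1}`. For `v_k = x ^ k` the equation for a fixed vector is therefore
`x ^ (i-1) * (f x² - 2 x + d) = 0`, and `x = (1 - s) / f` with `s² = 1 - d f` is a root of this
quadratic. Invariance of the line spanned by `v` follows by linearity. -/

open Matrix

theorem quadratic_root {d f s x : ℂ} (hf : f ≠ 0) (hs : s ^ 2 = 1 - d * f)
    (hx : x = (1 - s) / f) : d - x + f * x ^ 2 = x := by
  have hfx : f * x = 1 - s := by rw [hx]; field_simp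
  apply mul_left_cancel₀ hf
  linear_combination (f * x - 1 - s) * hfx + hs

/-- Entries of `T_{m+1}(M₁)`: row `m + 1` carries `d, -1, f` in columns `m, m + 1, m + 2`, and
every other row is a row of the identity. -/
theorem TLoc_entry (n m : ℕ) (d f : ℂ) (j k : Fin (n + 1)) :
    TLoc n (m + 1) !![1, 0, 0; d, -1, f; 0, 0, 1] j k =
      if (j : ℕ) = m + 1 then
        (if (k : ℕ) = m then d else 0) + (if (k : ℕ) = m + 1 then -1 else 0)
          + (if (k : ℕ) = m + 2 then f else 0)
      else if j = k then 1 else 0 := by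
  obtain ⟨j, hj⟩ := j
  obtain ⟨k, hk⟩ := k
  simp only [TLoc, Matrix.of_apply, Fin.mk.injEq, Nat.add_sub_cancel]
  by_cases h1 : m ≤ j ∧ j ≤ m + 1 + 1
  · by_cases h2 : m ≤ k ∧ k ≤ m + 1 + 1
    · rw [dif_pos h1, dif_pos h2]
      obtain ⟨a, rfl⟩ := Nat.exists_eq_add_of_le h1.1
      obtain ⟨b, rfl⟩ := Nat.exists_eq_add_of_le h2.1
      have ha : a < 3 := by omega
      have hb : b < 3 := by omega
      interval_cases a <;> interval_cases b <;> simp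
    · rw [dif_pos h1, dif_neg h2]
      split_ifs <;> first | omega | simp
  · rw [dif_neg h1, if_neg (show ¬ j = m + 1 by omega)]

theorem TLoc_mulVec_pow (n m : ℕ) (hm : m + 2 ≤ n) {d f x : ℂ}
    (hq : d - x + f * x ^ 2 = x) :
    (TLoc n (m + 1) !![1, 0, 0; d, -1, f; 0, 0, 1]).mulVec (fun k : Fin (n+1) => x ^ (k : ℕ))
      = fun k : Fin (n+1) => x ^ (k : ℕ) := by
  funext j
  simp only [Matrix.mulVec, dotProduct, TLoc_entry]
  by_cases hj : (j : ℕ) = m + 1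
  · have key : ∀ (c : ℂ) (p : ℕ), p ≤ n →
        ∑ k : Fin (n + 1), (if (k : ℕ) = p then c else 0) * x ^ (k : ℕ) = c * x ^ p := by
      intro c p hp
      rw [Finset.sum_eq_single (⟨p, by omega⟩ : Fin (n + 1))]
      · simp
      · intro b _ hb
        rw [if_neg (fun h => hb (Fin.ext h)), zero_mul]
      · simp
    simp only [if_pos hj, add_mul, Finset.sum_add_distrib]
    rw [key _ _ (by omega), key _ _ (by omega), key _ _ hm, hj]
    linear_combination x ^ m * hq
  · simp [if_neg hj]

/-- for `f ≠ 0`, `s² = 1 - d·f` and `x = (1-s)/f`, the vector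
`v = (1, x, x², …, xⁿ)ᵀ` is fixed by every `T_i(M₁)` where `M₁ = [[1,0,0],[d,-1,f],[0,0,1]]`;
in particular the line spanned by `v` is invariant under the representation `τ₁` of `Tₙ`. -/
theorem stmt3 (n : ℕ) (hn : 4 ≤ n) (d f s x : ℂ) (hf : f ≠ 0)
    (hs : s ^ 2 = 1 - d * f) (hx : x = (1 - s) / f) :
    (∀ i : ℕ, 1 ≤ i → i ≤ n - 1 →
      (TLoc n i !![1, 0, 0; d, -1, f; 0, 0, 1]).mulVec (fun k : Fin (n+1) => x ^ (k : ℕ))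
        = fun k : Fin (n+1) => x ^ (k : ℕ)) ∧
    (∀ i : ℕ, 1 ≤ i → i ≤ n - 1 →
      ∀ u ∈ Submodule.span ℂ ({fun k : Fin (n+1) => x ^ (k : ℕ)} : Set (Fin (n+1) → ℂ)),
        (TLoc n i !![1, 0, 0; d, -1, f; 0, 0, 1]).mulVec u ∈
          Submodule.span ℂ ({fun k : Fin (n+1) => x ^ (k : ℕ)} : Set (Fin (n+1) → ℂ))) := by
  have fixed : ∀ i : ℕ, 1 ≤ i → i ≤ n - 1 →
      (TLoc n i !![1, 0, 0; d, -1, f; 0, 0, 1]).mulVec (fun k : Fin (n+1) => x ^ (k : ℕ))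
        = fun k : Fin (n+1) => x ^ (k : ℕ) := by
    intro i h1 h2
    obtain ⟨m, rfl⟩ := Nat.exists_eq_add_of_le' h1
    exact TLoc_mulVec_pow n m (by omega) (quadratic_root hf hs hx)
  refine ⟨fixed, fun i h1 h2 u hu => ?_⟩
  obtain ⟨c, rfl⟩ := Submodule.mem_span_singleton.mp hu
  rw [Matrix.mulVec_smul, fixed i h1 h2]
  exact hu
end

section
/- Let f, h, s ∈ ℂ with f ≠ 0 and s² = 1 − f·h, and set x = (1 + s)/f. For i = 1,2,3 let Q_i = I_{i−1} ⊕ [[−s,f],[h,s]] ⊕ I_{3−i} (4×4 matrices). Then the vector X = (1, x, x², x³)ᵀ ∈ ℂ⁴ satisfies Q_i·X = X for i = 1,2,3; in particular the representation τ₂⁽¹⁾ of T₄ given by s_i ↦ Q_i is reducible. -/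
/-!
Since `f * x = 1 + s` and `f * h = (1 - s) * (1 + s)`, the block `[[-s, f], [h, s]]` fixes
`(1, x)ᵀ`. In `X = (1, x, x², x³)ᵀ` any two consecutive entries are a multiple of `(1, x)`, so
every `Q_i` fixes `X`, and the line spanned by `X` is a proper nonzero invariant subspace.
-/

open Matrix

/-- `TLoc2 n i M` is the `(n+1)×(n+1)` matrix `I_{i-1} ⊕ M ⊕ I_{n-i}` for a 2×2 block `M`:
the block occupies rows and columns `i-1, i` (with `i` 1-indexed, `1 ≤ i ≤ n`). -/
def TLoc2 (n i : ℕ) (M : Matrix (Fin 2) (Fin 2) ℂ) : Matrix (Fin (n+1)) (Fin (n+1)) ℂ :=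
  Matrix.of fun j k =>
    if hj : i - 1 ≤ (j : ℕ) ∧ (j : ℕ) ≤ i then
      if hk : i - 1 ≤ (k : ℕ) ∧ (k : ℕ) ≤ i then
        M ⟨(j : ℕ) - (i - 1), by omega⟩ ⟨(k : ℕ) - (i - 1), by omega⟩
      else 0
    else if j = k then 1 else 0

/-- with `f ≠ 0` and `s² = 1 - f·h`, the vector `X = (1, x, x², x³)ᵀ` with
`x = (1+s)/f` is fixed by every `Q_i = I_{i-1} ⊕ [[-s,f],[h,s]] ⊕ I_{3-i}`; in particular
the representation `τ₂⁽¹⁾` of `T₄` given by `s_i ↦ Q_i` is reducible. -/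
theorem stmt7 (f h s x : ℂ) (hf : f ≠ 0) (hs : s ^ 2 = 1 - f * h) (hx : x = (1 + s) / f) :
    (∀ i : ℕ, 1 ≤ i → i ≤ 3 →
      (TLoc2 3 i !![-s, f; h, s]).mulVec (fun k : Fin 4 => x ^ (k : ℕ))
        = fun k : Fin 4 => x ^ (k : ℕ)) ∧
    (∃ U : Submodule ℂ (Fin 4 → ℂ), U ≠ ⊥ ∧ U ≠ ⊤ ∧
      ∀ u ∈ U, ∀ i : ℕ, 1 ≤ i → i ≤ 3 →
        (TLoc2 3 i !![-s, f; h, s]).mulVec u ∈ U) := by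
  -- The two identities saying that the 2×2 block fixes `(1, x)ᵀ`.
  have h1 : f * x = 1 + s := by rw [hx]; field_simp
  have h2 : h + s * x = x := by
    apply mul_left_cancel₀ hf
    linear_combination (s - 1) * h1 + hs
  have key : ∀ i : ℕ, 1 ≤ i → i ≤ 3 →
      (TLoc2 3 i !![-s, f; h, s]).mulVec (fun k : Fin 4 => x ^ (k : ℕ))
        = fun k : Fin 4 => x ^ (k : ℕ) := by
    intro i hi1 hi3
    -- Row `i - 1` is `x ^ (i - 1)` times `h1`, and row `i` is `x ^ (i - 1)` times `h2`.
    interval_cases i <;> ext k <;> fin_cases k <;>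
      simp [TLoc2, Matrix.mulVec, dotProduct, Fin.sum_univ_four]
    · linear_combination h1
    · linear_combination h2
    · linear_combination x * h1
    · linear_combination x * h2
    · linear_combination x ^ 2 * h1
    · linear_combination x ^ 2 * h2
  refine ⟨key, Submodule.span ℂ {fun k : Fin 4 => x ^ (k : ℕ)}, ?_, ?_, ?_⟩
  · rw [Ne, Submodule.span_singleton_eq_bot]
    intro h0
    simpa using congrFun h0 0
  · intro htop
    -- The second basis vector is not a multiple of `X`, whose first entry is `1`.
    have hmem : (Pi.single 1 1 : Fin 4 → ℂ) ∈
        Submodule.span ℂ {fun k : Fin 4 => x ^ (k : ℕ)} := htop ▸ Submodule.mem_top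
    obtain ⟨c, hc⟩ := Submodule.mem_span_singleton.mp hmem
    have c0 : c = 0 := by simpa using congrFun hc 0
    simpa [c0] using congrFun hc 1
  · intro u hu i hi1 hi3
    obtain ⟨c, rfl⟩ := Submodule.mem_span_singleton.mp hu
    rw [Matrix.mulVec_smul, key i hi1 hi3]
    exact hu
end

section
/- Let n ≥ 4 and let M, N be 3×3 complex matrices satisfying conditions (V1)–(V8). Then the corresponding homogeneous 3-local representation of VT_n is reducible: there exists a ℂ-subspace U of ℂ^{n+1} with U ≠ 0 and U ≠ ℂ^{n+1} such that T_i(M)·u ∈ U and T_i(N)·u ∈ U for every u ∈ U and every 1 ≤ i ≤ n−1. -/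
/-! The blocks of `T₁(A)` and `T₃(B)` overlap in a single coordinate, so comparing the lower left
corners of `T₁(A) T₃(B) = T₃(B) T₁(A)` gives `B_{p0} A_{2q} = 0` for `p ∈ {1, 2}`, `q ∈ {0, 1}`
(`corner_eq_zero`). The commutation relations provide this for all `A, B ∈ {M, N}`. Hence either
the first columns of both `M` and `N` vanish below the diagonal, and the line spanned by the first
basis vector is invariant (`TLoc_apply_zero`), or the last rows of both vanish left of the diagonal,
and the hyperplane where the last coordinate vanishes is invariant (`TLoc_apply_last`). -/

open Matrix

lemma corner_eq_zero {A B : Matrix (Fin 3) (Fin 3) ℂ}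
    (h : TLoc 4 1 A * TLoc 4 3 B = TLoc 4 3 B * TLoc 4 1 A) :
    (B 1 0 = 0 ∧ B 2 0 = 0) ∨ (A 2 0 = 0 ∧ A 2 1 = 0) := by
  have h30 := congrFun (congrFun h 3) 0
  have h31 := congrFun (congrFun h 3) 1
  have h40 := congrFun (congrFun h 4) 0
  have h41 := congrFun (congrFun h 4) 1
  simp [Matrix.mul_apply, Fin.sum_univ_five, TLoc] at h30 h31 h40 h41
  grind

/-- If the first column of `A` vanishes below the diagonal, so does that of `T_i(A)`. -/
lemma TLoc_apply_zero {n i : ℕ} (hi : 1 ≤ i) {A : Matrix (Fin 3) (Fin 3) ℂ}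
    (hA : A 1 0 = 0 ∧ A 2 0 = 0) {j : Fin (n + 1)} (hj : j ≠ 0) : TLoc n i A j 0 = 0 := by
  have hj' : (j : ℕ) ≠ 0 := fun h => hj (Fin.ext h)
  simp only [TLoc, Matrix.of_apply, Fin.val_zero, hj, if_false]
  split_ifs with h1 h2
  · obtain rfl : i = 1 := by omega
    obtain h | h : (j : ℕ) = 1 ∨ (j : ℕ) = 2 := by omega
    · simpa [h] using hA.1
    · simpa [h] using hA.2
  · exact dif_neg h2
  · rfl

/-- If the last row of `A` vanishes left of the diagonal, so does that of `T_i(A)`. -/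
lemma TLoc_apply_last {n i : ℕ} (hi : 1 ≤ i) (hin : i ≤ n - 1) {A : Matrix (Fin 3) (Fin 3) ℂ}
    (hA : A 2 0 = 0 ∧ A 2 1 = 0) {k : Fin (n + 1)} (hk : k ≠ Fin.last n) :
    TLoc n i A (Fin.last n) k = 0 := by
  have hk' : (k : ℕ) ≠ n := fun h => hk (Fin.ext h)
  have hkn := k.isLt
  simp only [TLoc, Matrix.of_apply, Fin.val_last, hk.symm, if_false]
  split_ifs with h1 h2
  · have e : n - (i - 1) = 2 := by omega
    obtain h | h : (k : ℕ) - (i - 1) = 0 ∨ (k : ℕ) - (i - 1) = 1 := by omega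
    · simpa [h, e] using hA.1
    · simpa [h, e] using hA.2
  · rfl
  · rfl

/-- every homogeneous 3-local representation of `VTₙ` (`n ≥ 4`) is reducible:
given (V1)–(V8), there is a nontrivial proper subspace of `ℂ^{n+1}` invariant under all
`T_i(M)` and `T_i(N)`. -/
theorem stmt10 (n : ℕ) (hn : 4 ≤ n) (M N : Matrix (Fin 3) (Fin 3) ℂ)
    (hV1 : M * M = 1)
    (hV2 : N * N = 1)
    (hV3 : TLoc 4 1 M * TLoc 4 3 M = TLoc 4 3 M * TLoc 4 1 M)
    (hV4 : TLoc 4 1 N * TLoc 4 3 N = TLoc 4 3 N * TLoc 4 1 N)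
    (hV5 : TLoc 4 1 M * TLoc 4 3 N = TLoc 4 3 N * TLoc 4 1 M)
    (hV6 : TLoc 4 1 N * TLoc 4 3 M = TLoc 4 3 M * TLoc 4 1 N)
    (hV7 : TLoc 3 1 N * TLoc 3 2 N * TLoc 3 1 N = TLoc 3 2 N * TLoc 3 1 N * TLoc 3 2 N)
    (hV8 : TLoc 3 1 N * TLoc 3 2 N * TLoc 3 1 M = TLoc 3 2 M * TLoc 3 1 N * TLoc 3 2 N) :
    ∃ U : Submodule ℂ (Fin (n+1) → ℂ), U ≠ ⊥ ∧ U ≠ ⊤ ∧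
      ∀ u ∈ U, ∀ i : ℕ, 1 ≤ i → i ≤ n - 1 →
        (TLoc n i M).mulVec u ∈ U ∧ (TLoc n i N).mulVec u ∈ U := by
  have hcase : ((M 1 0 = 0 ∧ M 2 0 = 0) ∧ (N 1 0 = 0 ∧ N 2 0 = 0)) ∨
      ((M 2 0 = 0 ∧ M 2 1 = 0) ∧ (N 2 0 = 0 ∧ N 2 1 = 0)) := by
    have h3 := corner_eq_zero hV3
    have h4 := corner_eq_zero hV4
    have h5 := corner_eq_zero hV5
    have h6 := corner_eq_zero hV6
    tauto
  have h0n : (0 : Fin (n + 1)) ≠ Fin.last n := by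
    intro h
    have := congrArg Fin.val h
    simp at this
    omega
  obtain ⟨hM, hN⟩ | ⟨hM, hN⟩ := hcase
  · -- The line spanned by the first basis vector, described by its vanishing coordinates.
    refine ⟨⨅ j : {j : Fin (n + 1) // j ≠ 0}, LinearMap.ker (LinearMap.proj (R := ℂ) j.1),
      ?_, ?_, ?_⟩
    · rw [Submodule.ne_bot_iff]
      refine ⟨Pi.single 0 1, ?_, by simp⟩
      simp only [Submodule.mem_iInf, LinearMap.mem_ker, LinearMap.proj_apply]
      exact fun j => Pi.single_eq_of_ne j.2 1
    · intro h
      have h1 : (1 : Fin (n + 1) → ℂ) ∈ (⊤ : Submodule ℂ (Fin (n + 1) → ℂ)) := trivial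
      rw [← h] at h1
      simp only [Submodule.mem_iInf, LinearMap.mem_ker, LinearMap.proj_apply] at h1
      exact one_ne_zero (h1 ⟨Fin.last n, h0n.symm⟩)
    · intro u hu i hi _
      simp only [Submodule.mem_iInf, LinearMap.mem_ker, LinearMap.proj_apply] at hu ⊢
      have key : ∀ A : Matrix (Fin 3) (Fin 3) ℂ, (A 1 0 = 0 ∧ A 2 0 = 0) →
          ∀ j : {j : Fin (n + 1) // j ≠ 0}, (TLoc n i A).mulVec u j.1 = 0 := by
        intro A hA j
        rw [Matrix.mulVec, dotProduct]
        refine Finset.sum_eq_zero fun k _ => ?_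
        by_cases hk : k = 0
        · rw [hk, TLoc_apply_zero hi hA j.2, zero_mul]
        · rw [hu ⟨k, hk⟩, mul_zero]
      exact ⟨key M hM, key N hN⟩
  · refine ⟨LinearMap.ker (LinearMap.proj (R := ℂ) (Fin.last n)), ?_, ?_, ?_⟩
    · rw [Submodule.ne_bot_iff]
      exact ⟨Pi.single 0 1, Pi.single_eq_of_ne h0n.symm 1, by simp⟩
    · intro h
      have h1 : (1 : Fin (n + 1) → ℂ) ∈ (⊤ : Submodule ℂ (Fin (n + 1) → ℂ)) := trivial
      rw [← h] at h1
      exact one_ne_zero (α := ℂ) h1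
    · intro u hu i hi hin
      simp only [LinearMap.mem_ker, LinearMap.proj_apply] at hu ⊢
      have key : ∀ A : Matrix (Fin 3) (Fin 3) ℂ, (A 2 0 = 0 ∧ A 2 1 = 0) →
          (TLoc n i A).mulVec u (Fin.last n) = 0 := by
        intro A hA
        rw [Matrix.mulVec, dotProduct]
        refine Finset.sum_eq_zero fun k _ => ?_
        by_cases hk : k = Fin.last n
        · rw [hk, hu, mul_zero]
        · rw [TLoc_apply_last hi hin hA hk, zero_mul]
      exact ⟨key M hM, key N hN⟩
end

section
/- Let M, N be 3×3 complex matrices satisfying conditions (V1)–(V8) and, in addition, (W) (N⊕I₁)(I₁⊕M)(M⊕I₁) = (I₁⊕M)(M⊕I₁)(I₁⊕N) as 4×4 matrices. Then the pair (M, N) has one of the following five forms (with parameters h, p, d, k ∈ ℂ nonzero): (1) M = [[1,0,0],[0,0,1/h],[0,h,0]], N = [[1,0,0],[0,0,p],[0,1/p,0]]; (2) M = [[0,1/d,0],[d,0,0],[0,0,1]], N = [[0,k,0],[1/k,0,0],[0,0,1]]; (3) M = N = [[1,0,0],[1/p,−1,p],[0,0,1]]; (4) M = N = [[1,k,0],[0,−1,0],[0,1/k,1]];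 (5) M = N = I₃. -/
open Matrix

theorem TLoc_four_one (M : Matrix (Fin 3) (Fin 3) ℂ) : TLoc 4 1 M =
    !![M 0 0, M 0 1, M 0 2, 0, 0; M 1 0, M 1 1, M 1 2, 0, 0; M 2 0, M 2 1, M 2 2, 0, 0;
      0, 0, 0, 1, 0; 0, 0, 0, 0, 1] := by
  ext i j; fin_cases i <;> fin_cases j <;> simp [TLoc]

theorem TLoc_four_three (M : Matrix (Fin 3) (Fin 3) ℂ) : TLoc 4 3 M =
    !![1, 0, 0, 0, 0; 0, 1, 0, 0, 0; 0, 0, M 0 0, M 0 1, M 0 2; 0, 0, M 1 0, M 1 1, M 1 2;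
      0, 0, M 2 0, M 2 1, M 2 2] := by
  ext i j; fin_cases i <;> fin_cases j <;> simp [TLoc]

theorem TLoc_three_one (M : Matrix (Fin 3) (Fin 3) ℂ) : TLoc 3 1 M =
    !![M 0 0, M 0 1, M 0 2, 0; M 1 0, M 1 1, M 1 2, 0; M 2 0, M 2 1, M 2 2, 0; 0, 0, 0, 1] := by
  ext i j; fin_cases i <;> fin_cases j <;> simp [TLoc]

theorem TLoc_three_two (M : Matrix (Fin 3) (Fin 3) ℂ) : TLoc 3 2 M =
    !![1, 0, 0, 0; 0, M 0 0, M 0 1, M 0 2; 0, M 1 0, M 1 1, M 1 2; 0, M 2 0, M 2 1, M 2 2] := by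
  ext i j; fin_cases i <;> fin_cases j <;> simp [TLoc]

/-- The consequences of far commutativity used below. The two blocks share one index, so each
entry of `(M ⊕ I₂ - 1)(I₂ ⊕ N - 1)`, and of the product in the other order, is zero or a single product
of an entry of `M - 1` and an entry of `N - 1`; the two supports meet only at the shared diagonal
position, so all other entries vanish. -/
theorem far_commute {M N : Matrix (Fin 3) (Fin 3) ℂ}
    (h : TLoc 4 1 M * TLoc 4 3 N = TLoc 4 3 N * TLoc 4 1 M) :
    (M 0 2 * N 0 2 = 0 ∧ M 2 0 * N 2 0 = 0) ∧ (M 1 2 * N 0 1 = 0 ∧ M 2 1 * N 1 0 = 0) ∧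
    (M 1 2 * (N 0 0 - 1) = 0 ∧ M 2 1 * (N 0 0 - 1) = 0) ∧
    ((M 2 2 - 1) * N 0 1 = 0 ∧ (M 2 2 - 1) * N 1 0 = 0) := by
  rw [TLoc_four_one, TLoc_four_three] at h
  simp at h
  grind

theorem exists_tridiagonal {M : Matrix (Fin 3) (Fin 3) ℂ} (h02 : M 0 2 = 0) (h20 : M 2 0 = 0) :
    ∃ a b d e f h i, M = !![a, b, 0; d, e, f; 0, h, i] := by
  refine ⟨M 0 0, M 0 1, M 1 0, M 1 1, M 1 2, M 2 1, M 2 2, ?_⟩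
  conv_lhs => rw [Matrix.eta_fin_three M, h02, h20]

theorem tridiagonal_sq {a b d e f h i : ℂ}
    (hV : !![a, b, 0; d, e, f; 0, h, i] * !![a, b, 0; d, e, f; 0, h, i] = 1) :
    a * a + b * d = 1 ∧ b * (a + e) = 0 ∧ b * f = 0 ∧ d * (a + e) = 0 ∧
      b * d + e * e + f * h = 1 ∧ f * (e + i) = 0 ∧ d * h = 0 ∧ h * (e + i) = 0 ∧
      f * h + i * i = 1 := by
  rw [Matrix.one_fin_three] at hV
  simp at hV
  grind

/-- The tridiagonal involutions satisfying the braid relation. -/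
theorem braid_involution_forms {a b d e f h i : ℂ} {N : Matrix (Fin 3) (Fin 3) ℂ}
    (hN : N = !![a, b, 0; d, e, f; 0, h, i]) (hV2 : N * N = 1)
    (hV7 : TLoc 3 1 N * TLoc 3 2 N * TLoc 3 1 N = TLoc 3 2 N * TLoc 3 1 N * TLoc 3 2 N) :
    (a = 1 ∧ b = 0 ∧ d = 0 ∧ e = 0 ∧ f ≠ 0 ∧ h = 1 / f ∧ i = 0) ∨
    (a = 0 ∧ b ≠ 0 ∧ d = 1 / b ∧ e = 0 ∧ f = 0 ∧ h = 0 ∧ i = 1) ∨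
    (a = 1 ∧ b = 0 ∧ d = 1 / f ∧ e = -1 ∧ f ≠ 0 ∧ h = 0 ∧ i = 1) ∨
    (a = 1 ∧ b ≠ 0 ∧ d = 0 ∧ e = -1 ∧ f = 0 ∧ h = 1 / b ∧ i = 1) ∨
    (a = 1 ∧ b = 0 ∧ d = 0 ∧ e = 1 ∧ f = 0 ∧ h = 0 ∧ i = 1) := by
  subst hN
  obtain ⟨h1, h2, h3, h4, h5, h6, h7, h8, h9⟩ := tridiagonal_sq hV2
  rw [TLoc_three_one, TLoc_three_two] at hV7
  have q00 : a * a + b * a * d = a := by simpa using congr_fun₂ hV7 0 0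
  have q33 : i = h * i * f + i * i := by simpa using congr_fun₂ hV7 3 3
  simp at hV7
  -- If `a ≠ 0`, the `(0, 0)` entry of the braid relation gives `a + bd = 1`; compare `a² + bd = 1`.
  have ha : (a = 0 ∧ b * d = 1) ∨ (a = 1 ∧ b * d = 0) := by
    by_cases h0 : a = 0
    · left; grind
    · right
      have : a + b * d = 1 := mul_left_cancel₀ h0 (by linear_combination q00)
      have : a * (a - 1) = 0 := by linear_combination h1 - this
      grind
  have hi : (i = 0 ∧ f * h = 1) ∨ (i = 1 ∧ f * h = 0) := by
    by_cases h0 : i = 0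
    · left; grind
    · right
      have : i + f * h = 1 := mul_left_cancel₀ h0 (by linear_combination -q33)
      have : i * (i - 1) = 0 := by linear_combination h9 - this
      grind
  rcases ha with ⟨rfl, ha⟩ | ⟨rfl, ha⟩
  · grind
  rcases hi with ⟨rfl, hi⟩ | ⟨rfl, hi⟩
  · grind
  have he : e = 1 ∨ e = -1 := by
    have : (e - 1) * (e + 1) = 0 := by linear_combination h5 - ha - hi
    grind
  rcases he with rfl | rfl
  · grind
  -- The `(1, 1)` entry of the braid relation; since `d * h = 0`, exactly one summand is nonzero.
  have hs : f * d + b * h = 1 := by grind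
  by_cases hd : d = 0
  · grind
  · grind

/-- classification of the homogeneous 3-local representations of `WTₙ`
(`n ≥ 4`): if `(M, N)` satisfies (V1)–(V8) and the welded condition (W), then `(M, N)`
has one of the listed five forms. -/
theorem stmt11 (M N : Matrix (Fin 3) (Fin 3) ℂ)
    (hV1 : M * M = 1)
    (hV2 : N * N = 1)
    (hV3 : TLoc 4 1 M * TLoc 4 3 M = TLoc 4 3 M * TLoc 4 1 M)
    (hV4 : TLoc 4 1 N * TLoc 4 3 N = TLoc 4 3 N * TLoc 4 1 N)
    (hV5 : TLoc 4 1 M * TLoc 4 3 N = TLoc 4 3 N * TLoc 4 1 M)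
    (hV6 : TLoc 4 1 N * TLoc 4 3 M = TLoc 4 3 M * TLoc 4 1 N)
    (hV7 : TLoc 3 1 N * TLoc 3 2 N * TLoc 3 1 N = TLoc 3 2 N * TLoc 3 1 N * TLoc 3 2 N)
    (hV8 : TLoc 3 1 N * TLoc 3 2 N * TLoc 3 1 M = TLoc 3 2 M * TLoc 3 1 N * TLoc 3 2 N)
    (hW : TLoc 3 1 N * TLoc 3 2 M * TLoc 3 1 M = TLoc 3 2 M * TLoc 3 1 M * TLoc 3 2 N) :
    (∃ h p : ℂ, h ≠ 0 ∧ p ≠ 0 ∧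
      M = !![1, 0, 0; 0, 0, 1 / h; 0, h, 0] ∧
      N = !![1, 0, 0; 0, 0, p; 0, 1 / p, 0]) ∨
    (∃ d k : ℂ, d ≠ 0 ∧ k ≠ 0 ∧
      M = !![0, 1 / d, 0; d, 0, 0; 0, 0, 1] ∧
      N = !![0, k, 0; 1 / k, 0, 0; 0, 0, 1]) ∨
    (∃ p : ℂ, p ≠ 0 ∧
      M = !![1, 0, 0; 1 / p, -1, p; 0, 0, 1] ∧
      N = !![1, 0, 0; 1 / p, -1, p; 0, 0, 1]) ∨
    (∃ k : ℂ, k ≠ 0 ∧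
      M = !![1, k, 0; 0, -1, 0; 0, 1 / k, 1] ∧
      N = !![1, k, 0; 0, -1, 0; 0, 1 / k, 1]) ∨
    (M = 1 ∧ N = 1) := by
  obtain ⟨⟨hM02, hM20⟩, -⟩ := far_commute hV3
  obtain ⟨⟨hN02, hN20⟩, -⟩ := far_commute hV4
  obtain ⟨a, b, d, e, f, h, i, hM⟩ :=
    exists_tridiagonal (mul_self_eq_zero.mp hM02) (mul_self_eq_zero.mp hM20)
  obtain ⟨a', b', d', e', f', h', i', hN⟩ :=
    exists_tridiagonal (mul_self_eq_zero.mp hN02) (mul_self_eq_zero.mp hN20)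
  have f5 := far_commute hV5
  have f6 := far_commute hV6
  have hb := braid_involution_forms hN hV2 hV7
  subst hM hN
  simp only [Matrix.of_apply, Matrix.cons_val', Matrix.cons_val] at f5 f6
  have hsq := tridiagonal_sq hV1
  clear hM02 hM20 hN02 hN20 hV1 hV2 hV3 hV4 hV5 hV6 hV7
  rw [TLoc_three_one, TLoc_three_two, TLoc_three_one, TLoc_three_two] at hV8 hW
  rcases hb with ⟨rfl, rfl, rfl, rfl, hf, rfl, rfl⟩ | ⟨rfl, hb, rfl, rfl, rfl, rfl, rfl⟩ |
    ⟨rfl, rfl, rfl, rfl, hf, rfl, rfl⟩ | ⟨rfl, hb, rfl, rfl, rfl, rfl, rfl⟩ |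
    ⟨rfl, rfl, rfl, rfl, rfl, rfl, rfl⟩
  all_goals simp at hV8 hW
  · have : a = 1 ∧ b = 0 ∧ d = 0 ∧ e = 0 ∧ i = 0 ∧ h ≠ 0 ∧ f = 1 / h := by grind
    obtain ⟨rfl, rfl, rfl, rfl, rfl, hh, rfl⟩ := this
    exact .inl ⟨h, f', hh, hf, rfl, rfl⟩
  · have : i = 1 ∧ f = 0 ∧ h = 0 ∧ e = 0 ∧ a = 0 ∧ d ≠ 0 ∧ b = 1 / d := by grind
    obtain ⟨rfl, rfl, rfl, rfl, rfl, hd, rfl⟩ := this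
    exact .inr (.inl ⟨d, b', hd, hb, rfl, rfl⟩)
  · have : a = 1 ∧ b = 0 ∧ d = 1 / f' ∧ e = -1 ∧ f = f' ∧ h = 0 ∧ i = 1 := by grind
    obtain ⟨rfl, rfl, rfl, rfl, rfl, rfl, rfl⟩ := this
    exact .inr (.inr (.inl ⟨f, hf, rfl, rfl⟩))
  · have : a = 1 ∧ d = 0 ∧ b = b' ∧ e = -1 ∧ h = 1 / b' ∧ f = 0 ∧ i = 1 := by grind
    obtain ⟨rfl, rfl, rfl, rfl, rfl, rfl, rfl⟩ := this
    exact .inr (.inr (.inr (.inl ⟨b, hb, rfl, rfl⟩)))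
  · have : a = 1 ∧ d = 0 ∧ b = 0 ∧ e = 1 ∧ h = 0 ∧ f = 0 ∧ i = 1 := by grind
    obtain ⟨rfl, rfl, rfl, rfl, rfl, rfl, rfl⟩ := this
    exact .inr (.inr (.inr (.inr ⟨Matrix.one_fin_three.symm, Matrix.one_fin_three.symm⟩)))
end

section
/- Let n ≥ 4 and let M, N be 3×3 complex matrices satisfying conditions (V1)–(V8) together with (W) (N⊕I₁)(I₁⊕M)(M⊕I₁) = (I₁⊕M)(M⊕I₁)(I₁⊕N). Then the corresponding homogeneous 3-local representation of WT_n is reducible: there exists a ℂ-subspace U of ℂ^{n+1} with U ≠ 0 and U ≠ ℂ^{n+1} such that T_i(M)·u ∈ U and T_i(N)·u ∈ U for every u ∈ U and every 1 ≤ i ≤ n−1. -/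
/-!
The commutation relations between `M ⊕ I₂` and `I₂ ⊕ M` (and their variants with `N`) already
force reducibility. In the product `(P ⊕ I₂)(I₂ ⊕ Q)` the two blocks overlap in a single
coordinate, so its upper right corner consists of the products `P j 2 * Q 0 k` with `j ≠ 2`,
`k ≠ 0`, while the same corner of `(I₂ ⊕ Q)(P ⊕ I₂)` vanishes (`mul_eq_zero_of_comm`). Letting `P`
and `Q` range over `M` and `N`, one concludes that either the first rows of `M` and `N` both vanish
off the diagonal, or their last columns both do. In the first case the hyperplane `u 0 = 0` is
invariant under all `T_i` (`TLoc_mulVec_zero`); in the second case the line spanned by the last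
basis vector is (`TLoc_mulVec_of_lt`).
-/

open Matrix

/-- Comparing the entries in rows `0, 1` and columns `3, 4` of the two products. -/
lemma mul_eq_zero_of_comm {P Q : Matrix (Fin 3) (Fin 3) ℂ}
    (h : TLoc 4 1 P * TLoc 4 3 Q = TLoc 4 3 Q * TLoc 4 1 P) :
    (P 0 2 * Q 0 1 = 0 ∧ P 0 2 * Q 0 2 = 0) ∧ (P 1 2 * Q 0 1 = 0 ∧ P 1 2 * Q 0 2 = 0) := by
  have key : ∀ a b, (TLoc 4 1 P * TLoc 4 3 Q) a b = (TLoc 4 3 Q * TLoc 4 1 P) a b := by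
    intro a b
    rw [h]
  have h03 := key 0 3
  have h04 := key 0 4
  have h13 := key 1 3
  have h14 := key 1 4
  simp [Matrix.mul_apply, Fin.sum_univ_succ, TLoc] at h03 h04 h13 h14
  simp only [mul_eq_zero]
  exact ⟨⟨h03, h04⟩, h13, h14⟩

lemma TLoc_mulVec_zero {n i : ℕ} {M : Matrix (Fin 3) (Fin 3) ℂ} (h1 : M 0 1 = 0) (h2 : M 0 2 = 0)
    {u : Fin (n + 1) → ℂ} (hu : u 0 = 0) : (TLoc n i M).mulVec u 0 = 0 := by
  rw [Matrix.mulVec, dotProduct]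
  refine Finset.sum_eq_zero fun k _ => ?_
  by_cases hk0 : k = 0
  · simp [hk0, hu]
  suffices h : TLoc n i M 0 k = 0 by simp [h]
  have hk : (k : ℕ) ≠ 0 := fun h => hk0 (Fin.ext h)
  simp only [TLoc, Matrix.of_apply]
  split_ifs with hj hk' hjk
  · have e0 : (⟨((0 : Fin (n + 1)) : ℕ) - (i - 1), by simp⟩ : Fin 3) = 0 := by
      ext; simp
    have hi : i - 1 = 0 := by simpa using hj.1
    have : (k : ℕ) - (i - 1) = 1 ∨ (k : ℕ) - (i - 1) = 2 := by omega
    rw [e0]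
    rcases this with h | h
    · simpa [h] using h1
    · simpa [h] using h2
  · rfl
  · exact absurd hjk.symm hk0
  · rfl

lemma TLoc_mulVec_of_lt {n i : ℕ} {M : Matrix (Fin 3) (Fin 3) ℂ} (h0 : M 0 2 = 0) (h1 : M 1 2 = 0)
    (hi : 1 ≤ i) (hin : i ≤ n - 1)
    {u : Fin (n + 1) → ℂ} (hu : ∀ j : Fin (n + 1), (j : ℕ) < n → u j = 0)
    (j : Fin (n + 1)) (hj : (j : ℕ) < n) : (TLoc n i M).mulVec u j = 0 := by
  rw [Matrix.mulVec, dotProduct]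
  refine Finset.sum_eq_zero fun k _ => ?_
  by_cases hk : (k : ℕ) < n
  · simp [hu k hk]
  suffices h : TLoc n i M j k = 0 by simp [h]
  have hkn : (k : ℕ) = n := by omega
  simp only [TLoc, Matrix.of_apply]
  split_ifs with hj' hk' hjk
  -- The last coordinate lies in the block only for `i = n - 1`, where it is the third one.
  · have e : (k : ℕ) - (i - 1) = 2 := by omega
    have : (j : ℕ) - (i - 1) = 0 ∨ (j : ℕ) - (i - 1) = 1 := by omega
    rcases this with h | h
    · simpa [h, e] using h0
    · simpa [h, e] using h1
  · rfl
  · exact absurd (congrArg Fin.val hjk) (by omega)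
  · rfl

/-- every homogeneous 3-local representation of `WTₙ` (`n ≥ 4`) is reducible:
given (V1)–(V8) and (W), there is a nontrivial proper subspace of `ℂ^{n+1}` invariant
under all `T_i(M)` and `T_i(N)`. -/
theorem stmt12 (n : ℕ) (hn : 4 ≤ n) (M N : Matrix (Fin 3) (Fin 3) ℂ)
    (hV1 : M * M = 1)
    (hV2 : N * N = 1)
    (hV3 : TLoc 4 1 M * TLoc 4 3 M = TLoc 4 3 M * TLoc 4 1 M)
    (hV4 : TLoc 4 1 N * TLoc 4 3 N = TLoc 4 3 N * TLoc 4 1 N)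
    (hV5 : TLoc 4 1 M * TLoc 4 3 N = TLoc 4 3 N * TLoc 4 1 M)
    (hV6 : TLoc 4 1 N * TLoc 4 3 M = TLoc 4 3 M * TLoc 4 1 N)
    (hV7 : TLoc 3 1 N * TLoc 3 2 N * TLoc 3 1 N = TLoc 3 2 N * TLoc 3 1 N * TLoc 3 2 N)
    (hV8 : TLoc 3 1 N * TLoc 3 2 N * TLoc 3 1 M = TLoc 3 2 M * TLoc 3 1 N * TLoc 3 2 N)
    (hW : TLoc 3 1 N * TLoc 3 2 M * TLoc 3 1 M = TLoc 3 2 M * TLoc 3 1 M * TLoc 3 2 N) :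
    ∃ U : Submodule ℂ (Fin (n+1) → ℂ), U ≠ ⊥ ∧ U ≠ ⊤ ∧
      ∀ u ∈ U, ∀ i : ℕ, 1 ≤ i → i ≤ n - 1 →
        (TLoc n i M).mulVec u ∈ U ∧ (TLoc n i N).mulVec u ∈ U := by
  have hMM := mul_eq_zero_of_comm hV3
  have hNN := mul_eq_zero_of_comm hV4
  have hMN := mul_eq_zero_of_comm hV5
  have hNM := mul_eq_zero_of_comm hV6
  by_cases hrow : (M 0 1 = 0 ∧ M 0 2 = 0) ∧ (N 0 1 = 0 ∧ N 0 2 = 0)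
  · refine ⟨LinearMap.ker (LinearMap.proj (R := ℂ) (φ := fun _ : Fin (n + 1) => ℂ) 0),
      ?_, ?_, ?_⟩
    · rw [Submodule.ne_bot_iff]
      refine ⟨Pi.single (Fin.last n) 1, ?_, by simp⟩
      have : (0 : Fin (n + 1)) ≠ Fin.last n := by
        intro h
        have := congrArg Fin.val h
        simp at this
        omega
      simp [this]
    · intro h
      have : (Pi.single 0 1 : Fin (n + 1) → ℂ) ∈
          LinearMap.ker (LinearMap.proj (R := ℂ) (φ := fun _ : Fin (n + 1) => ℂ) 0) := by
        rw [h]; trivial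
      simp at this
    · intro u hu i _ _
      exact ⟨TLoc_mulVec_zero hrow.1.1 hrow.1.2 hu, TLoc_mulVec_zero hrow.2.1 hrow.2.2 hu⟩
  · have hcol : (M 0 2 = 0 ∧ M 1 2 = 0) ∧ (N 0 2 = 0 ∧ N 1 2 = 0) := by
      simp only [mul_eq_zero] at hMM hNN hMN hNM
      simp only [not_and_or] at hrow
      rcases hrow with hM | hN
      · rcases hM with h | h <;> simp only [h, or_false, and_false, false_and] at hMM hNM <;>
          simp only [hMM, hNM, and_self]
      · rcases hN with h | h <;> simp only [h, or_false, and_false, false_and] at hMN hNN <;>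
          simp only [hMN, hNN, and_self]
    -- The span of the last basis vector, written as the vectors supported at the last coordinate.
    let U : Submodule ℂ (Fin (n + 1) → ℂ) :=
      { carrier := {u | ∀ j : Fin (n + 1), (j : ℕ) < n → u j = 0}
        add_mem' := fun ha hb j hj => by simp [ha j hj, hb j hj]
        zero_mem' := fun _ _ => rfl
        smul_mem' := fun c _ ha j hj => by simp [ha j hj] }
    refine ⟨U, ?_, ?_, ?_⟩
    · rw [Submodule.ne_bot_iff]
      refine ⟨Pi.single (Fin.last n) 1, fun j hj => ?_, by simp⟩
      exact Pi.single_eq_of_ne (fun h => by simp [h] at hj) _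
    · intro h
      have hmem : (Pi.single 0 1 : Fin (n + 1) → ℂ) ∈ U := by
        rw [h]; trivial
      have := hmem 0 (by simp; omega)
      simp at this
    · intro u hu i hi hin
      exact ⟨TLoc_mulVec_of_lt hcol.1.1 hcol.1.2 hi hin hu,
        TLoc_mulVec_of_lt hcol.2.1 hcol.2.2 hi hin hu⟩
end

section
/- Let h, p ∈ ℂ with p ≠ 0, and let M = [[1,0,0],[0,1,0],[0,h,−1]] and N = [[1,0,0],[0,0,p],[0,1/p,0]] (the blocks of the representation δ₁ of VT_n with parameter e = 1). Then the 4×4 complex matrix C = (M ⊕ I₁)·(I₁ ⊕ N) satisfies C⁴ = I₄. Consequently, for every n ≥ 4 and 1 ≤ i ≤ n−2, the (n+1)×(n+1) matrix T_i(M)·T_{i+1}(N) has fourth power equal to the identity, i.e. δ₁((s_iρ_{i+1})⁴) = I_{n+1}. -/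
/-!
Both claims are instances of one fact, valid whenever `1 ≤ i` and `i + 2 ≤ n`. The product
`C = T_i(M) T_{i+1}(N)` fixes every coordinate of a vector except the two in (0-based) positions
`i + 1` and `i + 2`; if `a, b, c` are the coordinates in positions `i, i + 1, i + 2`, then `C` acts by
`(a, b, c) ↦ (a, h a - p c, b / p)`. Hence `C²` acts by `(a, b, c) ↦ (a, h a - b, h a / p - c)`,
which is an involution, so `C⁴ = 1`.
-/

open Matrix

theorem TLoc_mulVec_block (n k : ℕ) (hk : k + 2 < n + 1) (M : Matrix (Fin 3) (Fin 3) ℂ)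
    (v : Fin (n + 1) → ℂ) (a : Fin 3) :
    (TLoc n (k + 1) M *ᵥ v) ⟨k + a, by omega⟩ = ∑ b : Fin 3, M a b * v ⟨k + b, by omega⟩ := by
  symm
  refine Fintype.sum_of_injective (fun b : Fin 3 => (⟨k + b, by omega⟩ : Fin (n + 1))) ?_ _ _ ?_ ?_
  · intro b c hbc
    simp only [Fin.mk.injEq] at hbc
    exact Fin.ext (by omega)
  · intro l hl
    have hl' : ¬ (k ≤ (l : ℕ) ∧ (l : ℕ) ≤ k + 1 + 1) := fun hc =>
      hl ⟨⟨l - k, by omega⟩, Fin.ext (by simp only; omega)⟩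
    have ha : k + (a : ℕ) ≤ k + 1 + 1 := by omega
    simp [TLoc, hl', ha]
  · intro b
    have ha : k + (a : ℕ) ≤ k + 1 + 1 := by omega
    have hb : k + (b : ℕ) ≤ k + 1 + 1 := by omega
    simp [TLoc, ha, hb]

theorem TLoc_mulVec_of_notMem (n k : ℕ) (M : Matrix (Fin 3) (Fin 3) ℂ)
    (v : Fin (n + 1) → ℂ) (j : Fin (n + 1)) (hj : ¬ (k ≤ (j : ℕ) ∧ (j : ℕ) ≤ k + 2)) :
    (TLoc n (k + 1) M *ᵥ v) j = v j := by
  have hj' : ¬ (k ≤ (j : ℕ) ∧ (j : ℕ) ≤ k + 1 + 1) := hj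
  simp [TLoc, mulVec, dotProduct, hj']

theorem TLoc_M_mulVec (n k : ℕ) (hk : k + 2 < n + 1) (h : ℂ) (v : Fin (n + 1) → ℂ) :
    TLoc n (k + 1) !![1, 0, 0; 0, 1, 0; 0, h, -1] *ᵥ v =
      Function.update v ⟨k + 2, hk⟩ (h * v ⟨k + 1, by omega⟩ - v ⟨k + 2, hk⟩) := by
  ext j
  by_cases hj : k ≤ (j : ℕ) ∧ (j : ℕ) ≤ k + 2
  · obtain ⟨a, ha⟩ : ∃ a : Fin 3, k + (a : ℕ) = j :=
      ⟨⟨j - k, by omega⟩, by simp only; omega⟩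
    obtain rfl : (⟨k + a, by clear ha hj j; omega⟩ : Fin (n + 1)) = j := Fin.ext ha
    rw [TLoc_mulVec_block n k hk]
    fin_cases a <;> simp [Fin.sum_univ_three, sub_eq_add_neg]
  · rw [TLoc_mulVec_of_notMem n k _ _ _ hj, Function.update_of_ne]
    rintro rfl
    simp at hj

theorem TLoc_N_mulVec (n k : ℕ) (hk : k + 2 < n + 1) (p : ℂ) (v : Fin (n + 1) → ℂ) :
    TLoc n (k + 1) !![1, 0, 0; 0, 0, p; 0, 1 / p, 0] *ᵥ v =
      Function.update (Function.update v ⟨k + 1, by omega⟩ (p * v ⟨k + 2, hk⟩))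
        ⟨k + 2, hk⟩ (1 / p * v ⟨k + 1, by omega⟩) := by
  ext j
  by_cases hj : k ≤ (j : ℕ) ∧ (j : ℕ) ≤ k + 2
  · obtain ⟨a, ha⟩ : ∃ a : Fin 3, k + (a : ℕ) = j :=
      ⟨⟨j - k, by omega⟩, by simp only; omega⟩
    obtain rfl : (⟨k + a, by clear ha hj j; omega⟩ : Fin (n + 1)) = j := Fin.ext ha
    rw [TLoc_mulVec_block n k hk]
    fin_cases a <;> simp [Fin.sum_univ_three]
  · rw [TLoc_mulVec_of_notMem n k _ _ _ hj, Function.update_of_ne, Function.update_of_ne] <;>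
    · rintro rfl
      simp at hj

/-- With `i = k + 1`, the relation `(T_i(M) T_{i+1}(N))⁴ = 1` in every size that has room for both
blocks. -/
theorem TLoc_mul_pow_four (n k : ℕ) (hk : k + 3 < n + 1) (h p : ℂ) (hp : p ≠ 0) :
    (TLoc n (k + 1) !![1, 0, 0; 0, 1, 0; 0, h, -1] *
      TLoc n (k + 1 + 1) !![1, 0, 0; 0, 0, p; 0, 1 / p, 0]) ^ 4 = 1 := by
  set C := TLoc n (k + 1) !![1, 0, 0; 0, 1, 0; 0, h, -1] *
      TLoc n (k + 1 + 1) !![1, 0, 0; 0, 0, p; 0, 1 / p, 0] with hC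
  have key : ∀ v : Fin (n + 1) → ℂ, C *ᵥ v =
      Function.update (Function.update v ⟨k + 2, by omega⟩
        (h * v ⟨k + 1, by omega⟩ - p * v ⟨k + 3, hk⟩)) ⟨k + 3, hk⟩
        (1 / p * v ⟨k + 2, by omega⟩) := by
    intro v
    rw [hC, ← mulVec_mulVec, TLoc_N_mulVec n (k + 1) (by omega),
      TLoc_M_mulVec n k (by omega)]
    ext j
    simp only [Function.update_apply, Fin.ext_iff]
    split_ifs <;> first | omega | simp
  apply Matrix.mulVec_injective
  ext v j
  have hpow : C ^ 4 *ᵥ v = C *ᵥ (C *ᵥ (C *ᵥ (C *ᵥ v))) := by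
    simp only [mulVec_mulVec]
    congr 1
    noncomm_ring
  rw [hpow, one_mulVec]
  simp only [key]
  by_cases h2 : j = ⟨k + 2, by omega⟩
  · subst h2
    simp
    field_simp
    ring
  by_cases h3 : j = ⟨k + 3, hk⟩
  · subst h3
    simp
    field_simp
    ring
  simp [h2, h3]

/-- for the blocks of `δ₁` with `e = 1` (`M = [[1,0,0],[0,1,0],[0,h,-1]]`,
`N = [[1,0,0],[0,0,p],[0,1/p,0]]`, `p ≠ 0`), the 4×4 matrix `C = (M ⊕ I₁)(I₁ ⊕ N)`
satisfies `C⁴ = I₄`; consequently for every `n ≥ 4` and `1 ≤ i ≤ n-2` the matrix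
`T_i(M)·T_{i+1}(N)` has fourth power equal to the identity, i.e. `δ₁((s_iρ_{i+1})⁴) = 1`. -/
theorem stmt13 (h p : ℂ) (hp : p ≠ 0) :
    (TLoc 3 1 !![1, 0, 0; 0, 1, 0; 0, h, -1] * TLoc 3 2 !![1, 0, 0; 0, 0, p; 0, 1 / p, 0]) ^ 4
      = 1 ∧
    ∀ n : ℕ, 4 ≤ n → ∀ i : ℕ, 1 ≤ i → i ≤ n - 2 →
      (TLoc n i !![1, 0, 0; 0, 1, 0; 0, h, -1] *
        TLoc n (i + 1) !![1, 0, 0; 0, 0, p; 0, 1 / p, 0]) ^ 4 = 1 := by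
  refine ⟨TLoc_mul_pow_four 3 0 (by omega) h p hp, fun n hn i hi hin => ?_⟩
  obtain ⟨k, rfl⟩ : ∃ k, i = k + 1 := ⟨i - 1, by omega⟩
  exact TLoc_mul_pow_four n k (by omega) h p hp
end

section
/- Let b, k ∈ ℂ with k ≠ 0, and let M = [[1,b,0],[0,−1,0],[0,0,1]] and N = [[0,k,0],[1/k,0,0],[0,0,1]] (the blocks of the representation δ₅ of VT_n). Then the 4×4 complex matrix C = (M ⊕ I₁)·(I₁ ⊕ N) satisfies C⁴ = I₄. Consequently, for every n ≥ 4 and 1 ≤ i ≤ n−2, the (n+1)×(n+1) matrix T_i(M)·T_{i+1}(N) has fourth power equal to the identity, i.e. δ₅((s_iρ_{i+1})⁴) = I_{n+1}. -/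
/-!
The `4 × 4` identity `C ^ 4 = 1` is a direct computation with explicit matrices.

For general `n`, the two factors `T_i(M)` and `T_{i+1}(N)` both act nontrivially only on the window
of the four consecutive indices `i-1, i, i+1, i+2` (counted from `0`). The bijection
`windowEquiv` moves this window to the front, and `submatrix_windowEquiv_TLoc` shows that it turns
the factors into `(M ⊕ I₁) ⊕ I` and `(I₁ ⊕ N) ⊕ I`. Since reindexing and `A ↦ A ⊕ I` are
multiplicative, the general identity follows from the `4 × 4` one.
-/

open Matrix

/-- The bijection identifying `Fin (n+1)` with the window `{m, m+1, m+2, m+3}`, seen as `Fin 4`,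
together with its complement. -/
noncomputable def windowEquiv (n m : ℕ) (h : m + 3 ≤ n) :
    Fin 4 ⊕ {j : Fin (n + 1) // ¬ (m ≤ (j : ℕ) ∧ (j : ℕ) ≤ m + 3)} ≃ Fin (n + 1) :=
  Equiv.ofBijective (Sum.elim (fun a => ⟨m + a, by omega⟩) Subtype.val) <| by
    constructor
    · rintro (a | ⟨j, hj⟩) (c | ⟨l, hl⟩) hac
      all_goals simp [Fin.ext_iff] at hac ⊢
      all_goals omega
    · intro j
      by_cases hj : m ≤ (j : ℕ) ∧ (j : ℕ) ≤ m + 3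
      · exact ⟨Sum.inl ⟨j - m, by omega⟩, Fin.ext (by simp; omega)⟩
      · exact ⟨Sum.inr ⟨j, hj⟩, rfl⟩

lemma windowEquiv_inl (n m : ℕ) (h : m + 3 ≤ n) (a : Fin 4) :
    windowEquiv n m h (Sum.inl a) = ⟨m + a, by omega⟩ := rfl

lemma windowEquiv_inr (n m : ℕ) (h : m + 3 ≤ n)
    (j : {j : Fin (n + 1) // ¬ (m ≤ (j : ℕ) ∧ (j : ℕ) ≤ m + 3)}) :
    windowEquiv n m h (Sum.inr j) = j := rfl

/-- After reindexing, a matrix `T_{m+d}(M)` whose block lies inside the window is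
`T_d(M) ⊕ I`, with `T_d(M)` of size `4 × 4`. -/
lemma submatrix_windowEquiv_TLoc (n m d : ℕ) (h : m + 3 ≤ n) (hd : 1 ≤ d) (hd' : d ≤ 2)
    (M : Matrix (Fin 3) (Fin 3) ℂ) :
    (TLoc n (m + d) M).submatrix (windowEquiv n m h) (windowEquiv n m h) =
      fromBlocks (TLoc 3 d M) 0 0 1 := by
  ext (a | ⟨j, hj⟩) (c | ⟨l, hl⟩)
  · have key : ∀ x : ℕ, (m + d ≤ m + x + 1 ∧ m + x ≤ m + d + 1) ↔ (d ≤ x + 1 ∧ x ≤ d + 1) := by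
      omega
    have sub : ∀ x : ℕ, m + x - (m + d - 1) = x - (d - 1) := by omega
    simp [windowEquiv_inl, TLoc, key, sub, Fin.ext_iff]
  · have h2 : ¬ (m + (a : ℕ) = l) := by omega
    simp [windowEquiv_inl, windowEquiv_inr, TLoc, h2, Fin.ext_iff]
    omega
  · have h2 : ¬ ((j : ℕ) = m + (c : ℕ)) := by omega
    simp [windowEquiv_inl, windowEquiv_inr, TLoc, h2, Fin.ext_iff]
    omega
  · simp [windowEquiv_inr, TLoc, Matrix.one_apply]
    omega

/-- The `4 × 4` identity `((M ⊕ I₁)(I₁ ⊕ N)) ^ 4 = 1`. -/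
lemma TLoc_three_mul_pow_four (b k : ℂ) (hk : k ≠ 0) :
    (TLoc 3 1 !![1, b, 0; 0, -1, 0; 0, 0, 1] * TLoc 3 2 !![0, k, 0; 1 / k, 0, 0; 0, 0, 1]) ^ 4
      = 1 := by
  have hM : TLoc 3 1 !![1, b, 0; 0, -1, 0; 0, 0, 1] =
      !![1, b, 0, 0; 0, -1, 0, 0; 0, 0, 1, 0; 0, 0, 0, 1] := by
    ext x y
    fin_cases x <;> fin_cases y <;> simp [TLoc]
  have hN : TLoc 3 2 !![0, k, 0; 1 / k, 0, 0; 0, 0, 1] =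
      !![1, 0, 0, 0; 0, 0, k, 0; 0, 1 / k, 0, 0; 0, 0, 0, 1] := by
    ext x y
    fin_cases x <;> fin_cases y <;> simp [TLoc]
  have hC : (!![1, b, 0, 0; 0, -1, 0, 0; 0, 0, 1, 0; 0, 0, 0, 1] *
      !![1, 0, 0, 0; 0, 0, k, 0; 0, 1 / k, 0, 0; 0, 0, 0, 1] : Matrix (Fin 4) (Fin 4) ℂ) =
      !![1, 0, b * k, 0; 0, 0, -k, 0; 0, 1 / k, 0, 0; 0, 0, 0, 1] := by
    ext x y
    fin_cases x <;> fin_cases y <;> simp [Matrix.mul_apply, Fin.sum_univ_four]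
  have hC2 : (!![1, 0, b * k, 0; 0, 0, -k, 0; 0, 1 / k, 0, 0; 0, 0, 0, 1] :
      Matrix (Fin 4) (Fin 4) ℂ) ^ 2 =
      !![1, b, b * k, 0; 0, -1, 0, 0; 0, 0, -1, 0; 0, 0, 0, 1] := by
    ext x y
    fin_cases x <;> fin_cases y <;> simp [pow_two, Matrix.mul_apply, Fin.sum_univ_four, hk]
  rw [hM, hN, hC, pow_mul _ 2 2, hC2]
  ext x y
  fin_cases x <;> fin_cases y <;> simp [pow_two, Matrix.mul_apply, Fin.sum_univ_four]

/-- for the blocks of `δ₅` (`M = [[1,b,0],[0,-1,0],[0,0,1]]`,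
`N = [[0,k,0],[1/k,0,0],[0,0,1]]`, `k ≠ 0`), the 4×4 matrix `C = (M ⊕ I₁)(I₁ ⊕ N)`
satisfies `C⁴ = I₄`; consequently for every `n ≥ 4` and `1 ≤ i ≤ n-2` the matrix
`T_i(M)·T_{i+1}(N)` has fourth power equal to the identity, i.e. `δ₅((s_iρ_{i+1})⁴) = 1`. -/
theorem stmt14 (b k : ℂ) (hk : k ≠ 0) :
    (TLoc 3 1 !![1, b, 0; 0, -1, 0; 0, 0, 1] * TLoc 3 2 !![0, k, 0; 1 / k, 0, 0; 0, 0, 1]) ^ 4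
      = 1 ∧
    ∀ n : ℕ, 4 ≤ n → ∀ i : ℕ, 1 ≤ i → i ≤ n - 2 →
      (TLoc n i !![1, b, 0; 0, -1, 0; 0, 0, 1] *
        TLoc n (i + 1) !![0, k, 0; 1 / k, 0, 0; 0, 0, 1]) ^ 4 = 1 := by
  refine ⟨TLoc_three_mul_pow_four b k hk, fun n hn i hi hin => ?_⟩
  obtain ⟨m, rfl⟩ : ∃ m, i = m + 1 := ⟨i - 1, by omega⟩
  have h : m + 3 ≤ n := by omega
  -- Reindexing is an injective ring homomorphism, so the identity may be checked after it.
  apply (reindexAlgEquiv ℂ ℂ (windowEquiv n m h).symm).injective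
  rw [map_pow, map_mul, map_one]
  simp only [coe_reindexAlgEquiv, reindex_apply, Equiv.symm_symm, add_assoc, Nat.reduceAdd]
  rw [submatrix_windowEquiv_TLoc n m 1 h le_rfl one_le_two,
    submatrix_windowEquiv_TLoc n m 2 h one_le_two le_rfl, fromBlocks_multiply]
  simp only [Matrix.mul_zero, Matrix.zero_mul, add_zero, zero_add, mul_one]
  rw [fromBlocks_diagonal_pow, TLoc_three_mul_pow_four b k hk, one_pow, fromBlocks_one]
end

section
/- Let n ≥ 4. Suppose either (a) p ∈ ℂ is nonzero and M = N = [[1,0,0],[1/p,−1,p],[0,0,1]] (the representation δ₃ of VT_n with d = 1/p), or (b) k ∈ ℂ is nonzero and M = N = [[1,k,0],[0,−1,0],[0,1/k,1]] (the representation δ₄ of VT_n with h = 1/k). Then every group homomorphism δ : VT_n → GL_{n+1}(ℂ) with δ(s_i) = T_i(M) and δ(ρ_i) = T_i(N) for all 1 ≤ i ≤ n−1 is not injective; indeed δ(s₁) = δ(ρ₁) while s₁ ≠ ρ₁ in VT_n. -/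
/-!
Since `M = N`, any such `δ` identifies `s₁` with `ρ₁`. These are distinct elements of `VTₙ`: each
defining relation contains the same number, modulo 2, of twin generators `s_i` on both sides, so
the parity of that number is a homomorphism `VTₙ → ℤ/2`, sending `s₁` to `1` and `ρ₁` to `0`.
-/

open Matrix

/-- Generators of the (virtual/welded) twin group on `n` strands: `Sum.inl i` is the twin
generator `s_{i+1}` and `Sum.inr i` is the generator `ρ_{i+1}` (`i : Fin (n-1)`,
0-indexed; the 1-indexed generator `s_i` corresponds to `Sum.inl ⟨i-1,_⟩`). -/
abbrev TwinGen (n : ℕ) := Fin (n - 1) ⊕ Fin (n - 1)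

/-- The free-group letter for the twin generator `s_{i+1}`. -/
def sF (n : ℕ) (i : Fin (n - 1)) : FreeGroup (TwinGen n) := FreeGroup.of (Sum.inl i)

/-- The free-group letter for the generator `ρ_{i+1}`. -/
def rF (n : ℕ) (i : Fin (n - 1)) : FreeGroup (TwinGen n) := FreeGroup.of (Sum.inr i)

/-- The defining relators of the virtual twin group `VTₙ`:
`s_i² = 1`, `ρ_i² = 1`, `s_is_j = s_js_i`, `ρ_iρ_j = ρ_jρ_i`, `s_iρ_j = ρ_js_i` for
`|i-j| ≥ 2`, `ρ_iρ_{i+1}ρ_i = ρ_{i+1}ρ_iρ_{i+1}` and `ρ_iρ_{i+1}s_i = s_{i+1}ρ_iρ_{i+1}`. -/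
def vtRels (n : ℕ) : Set (FreeGroup (TwinGen n)) :=
  {w | (∃ i, w = sF n i * sF n i) ∨
       (∃ i, w = rF n i * rF n i) ∨
       (∃ i j : Fin (n - 1), ((i : ℕ) + 2 ≤ (j : ℕ) ∨ (j : ℕ) + 2 ≤ (i : ℕ)) ∧
          w = sF n i * sF n j * (sF n i)⁻¹ * (sF n j)⁻¹) ∨
       (∃ i j : Fin (n - 1), ((i : ℕ) + 2 ≤ (j : ℕ) ∨ (j : ℕ) + 2 ≤ (i : ℕ)) ∧
          w = rF n i * rF n j * (rF n i)⁻¹ * (rF n j)⁻¹) ∨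
       (∃ i j : Fin (n - 1), ((i : ℕ) + 2 ≤ (j : ℕ) ∨ (j : ℕ) + 2 ≤ (i : ℕ)) ∧
          w = sF n i * rF n j * (sF n i)⁻¹ * (rF n j)⁻¹) ∨
       (∃ i j : Fin (n - 1), (j : ℕ) = (i : ℕ) + 1 ∧
          w = rF n i * rF n j * rF n i * (rF n j * rF n i * rF n j)⁻¹) ∨
       (∃ i j : Fin (n - 1), (j : ℕ) = (i : ℕ) + 1 ∧
          w = rF n i * rF n j * sF n i * (sF n j * rF n i * rF n j)⁻¹)}

/-- The virtual twin group `VTₙ`, as a presented group. -/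
abbrev VTGroup (n : ℕ) := PresentedGroup (vtRels n)

/-- The generator `s_{i+1}` of `VTₙ` (0-indexed `i : Fin (n-1)`). -/
def sV (n : ℕ) (i : Fin (n - 1)) : VTGroup n := PresentedGroup.of (Sum.inl i)

/-- The generator `ρ_{i+1}` of `VTₙ` (0-indexed `i : Fin (n-1)`). -/
def rV (n : ℕ) (i : Fin (n - 1)) : VTGroup n := PresentedGroup.of (Sum.inr i)

/-- The parity of the number of letters `s_i`, as a homomorphism to `ℤ/2` written
multiplicatively. -/
def twinParity (n : ℕ) : VTGroup n →* Multiplicative (ZMod 2) :=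
  PresentedGroup.toGroup
    (f := Sum.elim (fun _ => Multiplicative.ofAdd 1) (fun _ => Multiplicative.ofAdd 0)) (by
      rintro w (⟨i, rfl⟩ | ⟨i, rfl⟩ | ⟨i, j, -, rfl⟩ | ⟨i, j, -, rfl⟩ | ⟨i, j, -, rfl⟩ |
        ⟨i, j, -, rfl⟩ | ⟨i, j, -, rfl⟩) <;>
      simp only [sF, rF, map_mul, map_inv, FreeGroup.lift_apply_of, Sum.elim_inl, Sum.elim_inr] <;>
      decide)

/-- for the representations `δ₃` with `d = 1/p` (`M = N =
[[1,0,0],[1/p,-1,p],[0,0,1]]`) or `δ₄` with `h = 1/k` (`M = N = [[1,k,0],[0,-1,0],[0,1/k,1]]`),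
every homomorphism `δ : VTₙ → GL_{n+1}(ℂ)` with `δ(s_i) = T_i(M)`, `δ(ρ_i) = T_i(N)` is
non-injective: `δ(s₁) = δ(ρ₁)` while `s₁ ≠ ρ₁` in `VTₙ`. -/
theorem stmt16 (n : ℕ) (hn : 4 ≤ n) (M N : Matrix (Fin 3) (Fin 3) ℂ)
    (hMN :
      (∃ p : ℂ, p ≠ 0 ∧ M = !![1, 0, 0; 1 / p, -1, p; 0, 0, 1] ∧
        N = !![1, 0, 0; 1 / p, -1, p; 0, 0, 1]) ∨
      (∃ k : ℂ, k ≠ 0 ∧ M = !![1, k, 0; 0, -1, 0; 0, 1 / k, 1] ∧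
        N = !![1, k, 0; 0, -1, 0; 0, 1 / k, 1])) :
    sV n ⟨0, by omega⟩ ≠ rV n ⟨0, by omega⟩ ∧
    ∀ δ : VTGroup n →* Matrix (Fin (n+1)) (Fin (n+1)) ℂ,
      (∀ i : Fin (n - 1), δ (sV n i) = TLoc n ((i : ℕ) + 1) M) →
      (∀ i : Fin (n - 1), δ (rV n i) = TLoc n ((i : ℕ) + 1) N) →
      δ (sV n ⟨0, by omega⟩) = δ (rV n ⟨0, by omega⟩) ∧ ¬ Function.Injective δ := by
  have hne : sV n ⟨0, by omega⟩ ≠ rV n ⟨0, by omega⟩ := by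
    intro h
    have h' := congrArg (twinParity n) h
    simp only [twinParity, sV, rV, PresentedGroup.toGroup.of, Sum.elim_inl, Sum.elim_inr] at h'
    exact absurd h' (by decide)
  refine ⟨hne, fun δ hs hr => ?_⟩
  have heq : δ (sV n ⟨0, by omega⟩) = δ (rV n ⟨0, by omega⟩) := by
    have hMN' : M = N := by
      rcases hMN with ⟨p, -, rfl, rfl⟩ | ⟨k, -, rfl, rfl⟩ <;> rfl
    rw [hs, hr, hMN']
  exact ⟨heq, fun hinj => hne (hinj heq)⟩
end

section
/- Let n ≥ 4 and let M be one of the diagonal matrices diag(1,−1,−1), diag(1,−1,1), diag(−1,−1,1) (the s-blocks of the representations δ₉, δ₁₀, δ₁₂ of the classification). Then (s₁s₂)² is a nontrivial element of VT_n, the (n+1)×(n+1) matrix (T₁(M)·T₂(M))² equals the identity, and consequently every group homomorphism δ : VT_n → GL_{n+1}(ℂ) with δ(s_i) = T_i(M) for all 1 ≤ i ≤ n−1 is not injective. -/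
/-!
Sending both `s_i` and `ρ_i` to the adjacent transposition `(i i+1)` respects all the defining
relations, so it gives a homomorphism from `VTₙ` to permutations. The image of `s₁s₂` is a 3-cycle,
whose square is not the identity; hence `(s₁s₂)² ≠ 1`. On the matrix side, the matrices `T_i(M)` are
diagonal with entries `±1`, so they are commuting involutions and `(T₁(M) T₂(M))² = 1`. A
homomorphism with `δ(s_i) = T_i(M)` therefore kills the nontrivial element `(s₁s₂)²`.
-/

open Matrix

/-- The adjacent transposition `(i i+1)` attached to either kind of generator. It is taken in the
permutations of `ℕ`, which contain those of the `n` strands, to avoid index casts. -/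
def transp (n : ℕ) : TwinGen n → Equiv.Perm ℕ
  | Sum.inl i => Equiv.swap (i : ℕ) (i + 1)
  | Sum.inr i => Equiv.swap (i : ℕ) (i + 1)

lemma swap_comm_of_far (i j : ℕ) (h : i + 2 ≤ j ∨ j + 2 ≤ i) :
    Equiv.swap i (i + 1) * Equiv.swap j (j + 1) =
      Equiv.swap j (j + 1) * Equiv.swap i (i + 1) := by
  ext x
  simp only [Equiv.Perm.mul_apply, Equiv.swap_apply_def]
  grind

lemma swap_braid (i : ℕ) :
    Equiv.swap i (i + 1) * Equiv.swap (i + 1) (i + 1 + 1) * Equiv.swap i (i + 1) =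
      Equiv.swap (i + 1) (i + 1 + 1) * Equiv.swap i (i + 1) *
        Equiv.swap (i + 1) (i + 1 + 1) := by
  ext x
  simp only [Equiv.Perm.mul_apply, Equiv.swap_apply_def]
  grind

lemma transp_rels (n : ℕ) : ∀ w ∈ vtRels n, FreeGroup.lift (transp n) w = 1 := by
  rintro w (⟨i, rfl⟩ | ⟨i, rfl⟩ | ⟨i, j, h, rfl⟩ | ⟨i, j, h, rfl⟩ | ⟨i, j, h, rfl⟩ |
    ⟨i, j, h, rfl⟩ | ⟨i, j, h, rfl⟩) <;>
    simp only [sF, rF, map_mul, map_inv, FreeGroup.lift_apply_of, transp]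
  · exact Equiv.swap_mul_self _ _
  · exact Equiv.swap_mul_self _ _
  · rw [swap_comm_of_far _ _ h]; group
  · rw [swap_comm_of_far _ _ h]; group
  · rw [swap_comm_of_far _ _ h]; group
  · rw [mul_inv_eq_one, h, swap_braid]
  · rw [mul_inv_eq_one, h, swap_braid]

/-- The homomorphism from `VTₙ` to permutations given by `s_i, ρ_i ↦ (i i+1)`. -/
def toPerm (n : ℕ) : VTGroup n →* Equiv.Perm ℕ := PresentedGroup.toGroup (transp_rels n)

lemma toPerm_sV (n : ℕ) (i : Fin (n - 1)) :
    toPerm n (sV n i) = Equiv.swap (i : ℕ) (i + 1) :=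
  PresentedGroup.toGroup.of (transp_rels n)

lemma TLoc_diagonal (n i : ℕ) (d : Fin 3 → ℂ) :
    TLoc n i (diagonal d) = diagonal fun j : Fin (n + 1) =>
      if hj : i - 1 ≤ (j : ℕ) ∧ (j : ℕ) ≤ i + 1 then d ⟨(j : ℕ) - (i - 1), by omega⟩ else 1 := by
  ext j k
  simp only [TLoc, Matrix.of_apply, diagonal_apply, Fin.ext_iff]
  grind

lemma TLoc_diagonal_sq (n : ℕ) (d : Fin 3 → ℂ) (hd : ∀ a, d a * d a = 1) :
    (TLoc n 1 (diagonal d) * TLoc n 2 (diagonal d)) ^ 2 = 1 := by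
  rw [TLoc_diagonal, TLoc_diagonal, diagonal_mul_diagonal, diagonal_pow, ← diagonal_one]
  congr 1
  ext j
  have hsq (a : Fin 3) : d a ^ 2 = 1 := by rw [sq, hd]
  rw [Pi.pow_apply, mul_pow]
  split_ifs <;> simp only [hsq, one_pow, mul_one]

/-- for `M` one of `diag(1,-1,-1)`, `diag(1,-1,1)`, `diag(-1,-1,1)` (the
`s`-blocks of `δ₉`, `δ₁₀`, `δ₁₂`), the element `(s₁s₂)²` of `VTₙ` is nontrivial while
`(T₁(M)·T₂(M))² = 1`; hence every homomorphism `δ : VTₙ → GL_{n+1}(ℂ)` with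
`δ(s_i) = T_i(M)` for all `i` is non-injective. -/
theorem stmt18 (n : ℕ) (hn : 4 ≤ n) (M : Matrix (Fin 3) (Fin 3) ℂ)
    (hM : M = !![1, 0, 0; 0, -1, 0; 0, 0, -1] ∨
          M = !![1, 0, 0; 0, -1, 0; 0, 0, 1] ∨
          M = !![-1, 0, 0; 0, -1, 0; 0, 0, 1]) :
    (sV n ⟨0, by omega⟩ * sV n ⟨1, by omega⟩) ^ 2 ≠ 1 ∧
    (TLoc n 1 M * TLoc n 2 M) ^ 2 = 1 ∧
    ∀ δ : VTGroup n →* Matrix (Fin (n+1)) (Fin (n+1)) ℂ,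
      (∀ i : Fin (n - 1), δ (sV n i) = TLoc n ((i : ℕ) + 1) M) →
      ¬ Function.Injective δ := by
  have h1 : (sV n ⟨0, by omega⟩ * sV n ⟨1, by omega⟩) ^ 2 ≠ 1 := by
    intro h
    -- The square of the 3-cycle `(0 1)(1 2)` moves `0` to `2`.
    have := congrArg (fun g => toPerm n g 0) h
    simp [toPerm_sV, sq, Equiv.swap_apply_def] at this
  have h2 : (TLoc n 1 M * TLoc n 2 M) ^ 2 = 1 := by
    obtain ⟨d, hd, rfl⟩ : ∃ d : Fin 3 → ℂ, (∀ a, d a * d a = 1) ∧ M = diagonal d := by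
      rcases hM with rfl | rfl | rfl
      · refine ⟨![1, -1, -1], fun a => by fin_cases a <;> simp, ?_⟩
        ext a b; fin_cases a <;> fin_cases b <;> simp
      · refine ⟨![1, -1, 1], fun a => by fin_cases a <;> simp, ?_⟩
        ext a b; fin_cases a <;> fin_cases b <;> simp
      · refine ⟨![-1, -1, 1], fun a => by fin_cases a <;> simp, ?_⟩
        ext a b; fin_cases a <;> fin_cases b <;> simp
    exact TLoc_diagonal_sq n d hd
  refine ⟨h1, h2, fun δ hδ hinj => h1 (hinj ?_)⟩
  rw [map_one, map_pow, map_mul, hδ, hδ]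
  exact h2
end
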